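/- arXiv:1009.4351 — 5 statements merged into one kernel-verified Lean document; each statement's English description precedes it below -/
import Mathlib

section
/- Let A ∈ GL_n(ℝ) be expansive, B = Aᵗ, Γ a full-rank lattice in ℝⁿ with dual lattice Γ*, and φ ∈ L²(ℝⁿ). Suppose there is a set M ⊂ ℝⁿ with ∪_{l∈ℤ} B^l(M) = ℝⁿ such that C₂ := (1/d(Γ)) · sup_{ξ∈M} ∑_{j∈ℤ} ∑_{γ∈Γ*} |\hat{φ}(B^j ξ) \hat{φ}(B^j ξ + γ)| < ∞. Then the wavelet system {D_{A^j} T_γ φ : j ∈ ℤ, γ ∈ Γ} is a Bessel sequence in L²(ℝⁿ) with Bessel bound C₂. -/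
open MeasureTheory Complex Set
open scoped ENNReal Topology ComplexConjugate Classical

noncomputable section

abbrev ℝn (n : ℕ) := Fin n → ℝ

/-- The Fourier transform `f̂(ξ) = ∫ f(x) e^{-2πi⟨ξ,x⟩} dx` (pointwise integral). -/
def ftrans {n : ℕ} (f : ℝn n → ℂ) (ξ : ℝn n) : ℂ :=
  ∫ x : ℝn n, Complex.exp (-(2 * Real.pi * (∑ i, ξ i * x i)) * Complex.I) * f x

/-- `fhat` is the (L²-) Fourier transform of `f`, characterized by the multiplication
formula against Schwartz functions. -/
def IsFourierPair {n : ℕ} (fhat f : ℝn n → ℂ) : Prop :=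
  ∀ g : SchwartzMap (ℝn n) ℂ,
    ∫ ξ : ℝn n, fhat ξ * g ξ = ∫ x : ℝn n, f x * ftrans (fun y => g y) x

/-- Dilation operator `D_M f(x) = |det M|^{1/2} f(Mx)`. -/
def dila {n : ℕ} (M : Matrix (Fin n) (Fin n) ℝ) (f : ℝn n → ℂ) : ℝn n → ℂ :=
  fun x => (Real.sqrt |M.det| : ℂ) * f (M.mulVec x)

/-- Translation operator `T_y f(x) = f(x - y)`. -/
def tran {n : ℕ} (y : ℝn n) (f : ℝn n → ℂ) : ℝn n → ℂ :=
  fun x => f (x - y)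

/-- Inner product `⟨f, g⟩ = ∫ f ⬝ conj g` of two functions. -/
def ip {n : ℕ} (f g : ℝn n → ℂ) : ℂ := ∫ x : ℝn n, f x * conj (g x)

/-- The element of L² determined by a square-integrable function (junk value `0` otherwise). -/
def toL2 {n : ℕ} (f : ℝn n → ℂ) : Lp ℂ 2 (volume : Measure (ℝn n)) :=
  if h : MemLp f 2 volume then h.toLp f else 0

/-- `F` is a Bessel family with bound `C`. -/
def IsBesselWith {n : ℕ} {ι : Type*} (F : ι → ℝn n → ℂ) (C : ℝ) : Prop :=
  ∀ f : ℝn n → ℂ, MemLp f 2 volume →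
    ∑' i, ((‖ip f (F i)‖₊ : ℝ≥0∞)) ^ 2 ≤ ENNReal.ofReal C * ∫⁻ x, (‖f x‖₊ : ℝ≥0∞) ^ 2

/-- `F` is a frame with bounds `C₁, C₂`. -/
def IsFrameWith {n : ℕ} {ι : Type*} (F : ι → ℝn n → ℂ) (C₁ C₂ : ℝ) : Prop :=
  ∀ f : ℝn n → ℂ, MemLp f 2 volume →
    ENNReal.ofReal C₁ * (∫⁻ x, (‖f x‖₊ : ℝ≥0∞) ^ 2) ≤ ∑' i, ((‖ip f (F i)‖₊ : ℝ≥0∞)) ^ 2 ∧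
    ∑' i, ((‖ip f (F i)‖₊ : ℝ≥0∞)) ^ 2 ≤ ENNReal.ofReal C₂ * ∫⁻ x, (‖f x‖₊ : ℝ≥0∞) ^ 2

/-- Reconstruction property: `f = ∑ᵢ ⟨f, G i⟩ F i` for every `f ∈ L²`. -/
def ReconstructionProp {n : ℕ} {ι : Type*} (F G : ι → ℝn n → ℂ) : Prop :=
  ∀ f : ℝn n → ℂ, MemLp f 2 volume →
    HasSum (fun i => ip f (G i) • toL2 (F i)) (toL2 f)

/-- Two families are dual frames: both are Bessel and the reconstruction formula holds. -/
def AreDualFrames {n : ℕ} {ι : Type*} (F G : ι → ℝn n → ℂ) : Prop :=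
  (∃ C, IsBesselWith F C) ∧ (∃ C, IsBesselWith G C) ∧ ReconstructionProp F G

/-- A real matrix is expansive if all its (complex) eigenvalues have modulus `> 1`. -/
def IsExpansive {n : ℕ} (M : Matrix (Fin n) (Fin n) ℝ) : Prop :=
  ∀ μ : ℂ, (M.map Complex.ofReal).charpoly.IsRoot μ → 1 < ‖μ‖

/-- Integer vector viewed in `ℝⁿ`. -/
def ivec {n : ℕ} (k : Fin n → ℤ) : ℝn n := fun i => (k i : ℝ)

/-- Image of a set under (the linear map given by) a matrix. -/
def mimg {n : ℕ} (M : Matrix (Fin n) (Fin n) ℝ) (S : Set (ℝn n)) : Set (ℝn n) :=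
  (fun x => M.mulVec x) '' S

/-- The wavelet system `{D_{A^j} T_{Pk} ψ}_{j ∈ ℤ, k ∈ ℤⁿ}` with translation lattice `Pℤⁿ`. -/
def waveletSystem {n : ℕ} (A P : Matrix (Fin n) (Fin n) ℝ) (ψ : ℝn n → ℂ) :
    ℤ × (Fin n → ℤ) → ℝn n → ℂ :=
  fun p => dila (A ^ p.1) (tran (P.mulVec (ivec p.2)) ψ)

/-- `E` is a multiplicative tiling set for `{B^j}`. -/
def IsMultTiling {n : ℕ} (B : Matrix (Fin n) (Fin n) ℝ) (E : Set (ℝn n)) : Prop :=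
  0 < volume E ∧ volume (Set.univ \ ⋃ j : ℤ, mimg (B ^ j) E) = 0 ∧
    ∀ j l : ℤ, j ≠ l → volume (mimg (B ^ j) E ∩ mimg (B ^ l) E) = 0

/-- A bounded multiplicative tiling set. -/
def IsBoundedMultTiling {n : ℕ} (B : Matrix (Fin n) (Fin n) ℝ) (E : Set (ℝn n)) : Prop :=
  IsMultTiling B E ∧ Bornology.IsBounded E ∧ (0 : ℝn n) ∉ closure E



def Qc (n : ℕ) : Set (ℝn n) := Set.pi Set.univ fun _ => Set.Ico (0:ℝ) 1

lemma ivec_bij (n : ℕ) : Function.Bijective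
    (fun k : Fin n → ℤ => (⟨ivec k, by
      rw [Submodule.mem_toAddSubgroup, (Pi.basisFun ℝ (Fin n)).mem_span_iff_repr_mem ℤ]
      intro i
      exact ⟨k i, by simp [ivec]⟩⟩ :
      (Submodule.span ℤ (Set.range (Pi.basisFun ℝ (Fin n)))).toAddSubgroup)) := by
  constructor
  · intro k l h
    have h' : ivec k = ivec l := congrArg Subtype.val h
    funext i
    have := congrFun h' i
    simpa [ivec] using this
  · rintro ⟨x, hx⟩
    rw [Submodule.mem_toAddSubgroup, (Pi.basisFun ℝ (Fin n)).mem_span_iff_repr_mem ℤ] at hx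
    choose k hk using hx
    refine ⟨k, ?_⟩
    apply Subtype.ext
    funext i
    have := hk i
    simpa [ivec] using this

lemma Qc_fd (n : ℕ) : IsAddFundamentalDomain
    (Submodule.span ℤ (Set.range (Pi.basisFun ℝ (Fin n)))).toAddSubgroup (Qc n) volume := by
  have := ZSpan.isAddFundamentalDomain' (Pi.basisFun ℝ (Fin n)) volume
  rwa [ZSpan.fundamentalDomain_pi_basisFun] at this

lemma fold_lintegral {n : ℕ} (f : ℝn n → ℝ≥0∞) :
    ∫⁻ x, f x = ∑' k : Fin n → ℤ, ∫⁻ x in Qc n, f (x + ivec k) := by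
  have := (ivec_bij n).surjective.countable
  rw [(Qc_fd n).lintegral_eq_tsum'' f, ← (Equiv.ofBijective _ (ivec_bij n)).tsum_eq]
  refine tsum_congr fun k => ?_
  refine lintegral_congr fun x => ?_
  congr 1
  rw [add_comm]; rfl

lemma fold_integral {n : ℕ} (f : ℝn n → ℂ) (hf : Integrable f) :
    ∫ x, f x = ∑' k : Fin n → ℤ, ∫ x in Qc n, f (x + ivec k) := by
  have := (ivec_bij n).surjective.countable
  rw [(Qc_fd n).integral_eq_tsum'' f hf, ← (Equiv.ofBijective _ (ivec_bij n)).tsum_eq]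
  refine tsum_congr fun k => ?_
  refine integral_congr_ae (Filter.Eventually.of_forall fun x => ?_)
  show f _ = f _
  congr 1
  rw [add_comm]; rfl

/-- The character `e^{2πi⟨x,k⟩}`. -/
def ech {n : ℕ} (k : Fin n → ℤ) (x : ℝn n) : ℂ :=
  Complex.exp ((2 * Real.pi * (∑ i, x i * ivec k i) : ℝ) * Complex.I)

lemma ech_norm {n : ℕ} (k : Fin n → ℤ) (x : ℝn n) : ‖ech k x‖ = 1 :=
  Complex.norm_exp_ofReal_mul_I _

lemma ech_cont {n : ℕ} (k : Fin n → ℤ) : Continuous (ech k) := by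
  unfold ech; fun_prop

lemma ech_add {n : ℕ} (k m : Fin n → ℤ) (x : ℝn n) : ech k (x + ivec m) = ech k x := by
  unfold ech
  have : ((2 * Real.pi * (∑ i, (x + ivec m) i * ivec k i) : ℝ) : ℂ) * I
      = ((2 * Real.pi * (∑ i, x i * ivec k i) : ℝ) : ℂ) * I
        + ((∑ i, m i * k i : ℤ) : ℂ) * (2 * Real.pi * I) := by
    simp only [Pi.add_apply, add_mul, Finset.sum_add_distrib, ivec]
    push_cast
    ring
  rw [this, Complex.exp_add, Complex.exp_int_mul_two_pi_mul_I, mul_one]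

lemma ech_orth {n : ℕ} (k l : Fin n → ℤ) :
    ∫ x in Qc n, conj (ech k x) * ech l x = if k = l then 1 else 0 := by
  have h1 : ∀ x : ℝn n, conj (ech k x) * ech l x
      = ∏ i, Complex.exp ((2 * Real.pi * I * (l i - k i : ℤ)) * x i) := by
    intro x
    unfold ech
    rw [← Complex.exp_conj, ← Complex.exp_add, ← Complex.exp_sum]
    congr 1
    simp only [map_mul, Complex.conj_ofReal, Complex.conj_I, ivec]
    push_cast
    rw [Finset.mul_sum, Finset.mul_sum, Finset.sum_mul, Finset.sum_mul, ← Finset.sum_add_distrib]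
    refine Finset.sum_congr rfl fun i _ => ?_
    ring
  simp_rw [h1]
  unfold Qc
  rw [volume_pi, Measure.restrict_pi_pi, integral_fintype_prod_eq_prod
    (fun i (t : ℝ) => Complex.exp ((2 * Real.pi * I * (l i - k i : ℤ)) * t))]
  have h2 : ∀ i, ∫ t in Set.Ico (0:ℝ) 1, Complex.exp ((2 * Real.pi * I * (l i - k i : ℤ)) * t)
      = if k i = l i then 1 else 0 := by
    intro i
    rw [MeasureTheory.integral_Ico_eq_integral_Ioc, ← intervalIntegral.integral_of_le zero_le_one]
    split_ifs with h
    · simp [h]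
    · have hc : (2 * Real.pi * I * (l i - k i : ℤ)) ≠ 0 := by
        have : ((l i - k i : ℤ) : ℂ) ≠ 0 := by
          exact_mod_cast sub_ne_zero.mpr (Ne.symm h)
        exact mul_ne_zero Complex.two_pi_I_ne_zero this
      rw [integral_exp_mul_complex hc]
      have : Complex.exp (2 * Real.pi * I * (l i - k i : ℤ) * (1:ℝ)) = 1 := by
        rw [← Complex.exp_int_mul_two_pi_mul_I (l i - k i)]
        congr 1; push_cast; ring
      rw [this]; simp
  simp_rw [h2]
  rw [Finset.prod_ite_zero]
  simp [funext_iff]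

lemma Qc_vol (n : ℕ) : volume (Qc n) = 1 := by
  unfold Qc
  rw [volume_pi, Measure.pi_pi]; simp

lemma Qc_bessel {n : ℕ} (H : ℝn n → ℂ) (hH : MemLp H 2 (volume.restrict (Qc n))) :
    ∑' k : Fin n → ℤ, (‖∫ x in Qc n, H x * ech k x‖₊ : ℝ≥0∞) ^ 2
      ≤ ∫⁻ x in Qc n, (‖H x‖₊ : ℝ≥0∞) ^ 2 := by
  have : IsFiniteMeasure (volume.restrict (Qc n)) := ⟨by simp [Qc_vol]⟩
  have he : ∀ k : Fin n → ℤ, MemLp (fun x => conj (ech k x)) 2 (volume.restrict (Qc n)) := by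
    intro k
    refine MemLp.of_bound ?_ 1 ?_
    · exact (Complex.continuous_conj.comp (ech_cont k)).aestronglyMeasurable
    · exact Filter.Eventually.of_forall fun x => by simp [ech_norm]
  have hon : Orthonormal ℂ (fun k => (he k).toLp _) := by
    rw [orthonormal_iff_ite]
    intro k l
    rw [L2.inner_def]
    have : ∫ a, inner ℂ ((he k).toLp _ a) ((he l).toLp _ a) ∂(volume.restrict (Qc n))
        = ∫ x in Qc n, conj (ech l x) * ech k x := by
      refine integral_congr_ae ?_
      filter_upwards [(he k).coeFn_toLp, (he l).coeFn_toLp] with x h1 h2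
      rw [h1, h2]; simp
    rw [this, ech_orth]
    simp [eq_comm]
  have hin : ∀ k, inner ℂ ((he k).toLp _) (hH.toLp H) = ∫ x in Qc n, H x * ech k x := by
    intro k
    rw [L2.inner_def]
    refine integral_congr_ae ?_
    filter_upwards [(he k).coeFn_toLp, hH.coeFn_toLp] with x h1 h2
    rw [h1, h2]; simp
  have hn : ENNReal.ofReal (‖hH.toLp H‖ ^ 2) = ∫⁻ x in Qc n, (‖H x‖₊ : ℝ≥0∞) ^ 2 := by
    rw [Lp.norm_toLp, ENNReal.ofReal_pow ENNReal.toReal_nonneg, ENNReal.ofReal_toReal hH.2.ne,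
      eLpNorm_eq_lintegral_rpow_enorm_toReal (by simp) (by simp)]
    simp only [ENNReal.toReal_ofNat]
    rw [← ENNReal.rpow_natCast, ← ENNReal.rpow_mul]
    simp
    rfl
  rw [← hn]
  rw [ENNReal.tsum_eq_iSup_sum]
  refine iSup_le fun s => ?_
  have := hon.sum_inner_products_le (hH.toLp H) (s := s)
  simp_rw [hin] at this
  refine le_trans (le_of_eq ?_) (ENNReal.ofReal_le_ofReal this)
  rw [ENNReal.ofReal_sum_of_nonneg (fun _ _ => by positivity)]
  refine Finset.sum_congr rfl fun k _ => ?_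
  rw [ENNReal.ofReal_pow (norm_nonneg _), ofReal_norm]
  rfl

lemma cs_tsum {ι : Type*} (a b : ι → NNReal) :
    (∑' m, (a m : ℝ≥0∞) * b m) ^ 2
      ≤ (∑' m, (a m : ℝ≥0∞) ^ 2 * b m) * ∑' l, (b l : ℝ≥0∞) := by
  have h2 : 2 * (∑' m, (a m : ℝ≥0∞) * b m) ^ 2
      ≤ 2 * ((∑' m, (a m : ℝ≥0∞) ^ 2 * b m) * ∑' l, (b l : ℝ≥0∞)) := by
    calc 2 * (∑' m, (a m : ℝ≥0∞) * b m) ^ 2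
        = ∑' m, ∑' l, 2 * (((a m : ℝ≥0∞) * b m) * (a l * b l)) := by
          simp_rw [ENNReal.tsum_mul_left, ENNReal.tsum_mul_right, sq]
      _ ≤ ∑' m, ∑' l, ((a m : ℝ≥0∞) ^ 2 * b m * b l + (a l : ℝ≥0∞) ^ 2 * b l * b m) := by
          refine ENNReal.tsum_le_tsum fun m => ENNReal.tsum_le_tsum fun l => ?_
          norm_cast
          have := mul_le_mul_left (two_mul_le_add_sq (a m) (a l)) (b m * b l)
          calc 2 * (a m * b m * (a l * b l)) = 2 * a m * a l * (b m * b l) := by ring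
            _ ≤ _ := this
            _ = _ := by ring
      _ = _ := by
          simp_rw [ENNReal.tsum_add]
          rw [ENNReal.tsum_comm (f := fun m l => (a l : ℝ≥0∞) ^ 2 * b l * b m)]
          simp_rw [ENNReal.tsum_mul_left, ENNReal.tsum_mul_right, two_mul]
  exact (ENNReal.mul_le_mul_iff_right (by simp) (by simp)).mp h2

lemma periodize_bessel {n : ℕ} (h : ℝn n → ℂ) (hm : Measurable h) (hi : Integrable h) :
    ∑' k : Fin n → ℤ, (‖∫ x, h x * ech k x‖₊ : ℝ≥0∞) ^ 2
      ≤ ∫⁻ x in Qc n, (∑' m : Fin n → ℤ, (‖h (x + ivec m)‖₊ : ℝ≥0∞)) ^ 2 := by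
  by_cases htop : ∫⁻ x in Qc n, (∑' m : Fin n → ℤ, (‖h (x + ivec m)‖₊ : ℝ≥0∞)) ^ 2 = ⊤
  · rw [htop]; exact le_top
  have hmm : ∀ m : Fin n → ℤ, Measurable fun x => h (x + ivec m) :=
    fun m => hm.comp (measurable_id.add_const _)
  set H : ℝn n → ℂ := fun x => ∑' m : Fin n → ℤ, h (x + ivec m) with hHdef
  have hHle : ∀ x, (‖H x‖₊ : ℝ≥0∞) ≤ ∑' m : Fin n → ℤ, (‖h (x + ivec m)‖₊ : ℝ≥0∞) :=
    fun x => enorm_tsum_le_tsum_enorm (f := fun m : Fin n → ℤ => h (x + ivec m))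
  have hHm : Measurable H := Measurable.tsum hmm
  have hle : ∫⁻ x in Qc n, (‖H x‖₊ : ℝ≥0∞) ^ 2 ≤
      ∫⁻ x in Qc n, (∑' m : Fin n → ℤ, (‖h (x + ivec m)‖₊ : ℝ≥0∞)) ^ 2 :=
    lintegral_mono fun x => pow_le_pow_left' (hHle x) 2
  have hH : MemLp H 2 (volume.restrict (Qc n)) := by
    refine ⟨hHm.aestronglyMeasurable, ?_⟩
    rw [eLpNorm_lt_top_iff_lintegral_rpow_enorm_lt_top (by simp) (by simp)]
    simp only [ENNReal.toReal_ofNat, ENNReal.rpow_ofNat]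
    exact lt_of_le_of_lt hle (lt_top_iff_ne_top.mpr htop)
  refine le_trans (le_of_eq ?_) ((Qc_bessel H hH).trans hle)
  refine tsum_congr fun k => ?_
  congr 3
  have hik : Integrable (fun x => h x * ech k x) := by
    refine hi.mul_bdd (c := 1) (ech_cont k).aestronglyMeasurable ?_
    exact Filter.Eventually.of_forall fun x => (ech_norm k x).le
  rw [fold_integral _ hik, ← integral_tsum]
  · refine integral_congr_ae (Filter.Eventually.of_forall fun x => ?_)
    simp only [ech_add, hHdef]
    rw [tsum_mul_right]
  · intro m
    exact ((hmm m).mul ((ech_cont k).measurable.comp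
      (measurable_id.add_const _))).aestronglyMeasurable
  · have := fold_lintegral (fun x => ‖h x * ech k x‖ₑ)
    rw [← this]
    exact hik.2.ne

lemma lattice_bessel {n : ℕ} (u v : ℝn n → ℂ) (hu : Measurable u) (hv : Measurable v)
    (hi : Integrable (fun x => u x * v x)) :
    ∑' k : Fin n → ℤ, (‖∫ x, u x * v x * ech k x‖₊ : ℝ≥0∞) ^ 2
      ≤ ∫⁻ x, (‖u x‖₊ : ℝ≥0∞) ^ 2 * ∑' m : Fin n → ℤ, (‖v x * v (x + ivec m)‖₊ : ℝ≥0∞) := by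
  refine (periodize_bessel _ (hu.mul hv) hi).trans ?_
  rw [fold_lintegral, ← lintegral_tsum]
  · refine lintegral_mono fun x => ?_
    simp only [Pi.mul_apply, nnnorm_mul, ENNReal.coe_mul]
    refine (cs_tsum _ _).trans (le_of_eq ?_)
    rw [← ENNReal.tsum_mul_right]
    refine tsum_congr fun m => ?_
    rw [ENNReal.tsum_mul_left, mul_assoc]
    congr 2
    rw [← (Equiv.addLeft m).tsum_eq]
    refine tsum_congr fun l => ?_
    congr 3
    rw [add_assoc]; congr 1
    funext i; simp [ivec]
  · intro k
    refine Measurable.aemeasurable ?_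
    have hs : Measurable fun x : ℝn n => x + ivec k := measurable_id.add_const _
    have : Measurable fun x => (‖u x‖₊ : ℝ≥0∞) ^ 2 *
        ∑' m : Fin n → ℤ, (‖v x * v (x + ivec m)‖₊ : ℝ≥0∞) := by
      refine (hu.enorm.pow_const 2).mul (Measurable.tsum fun m => ?_)
      exact (hv.mul (hv.comp (measurable_id.add_const _))).enorm
    exact this.comp hs

section

lemma mulVec_equiv {n : ℕ} (N : Matrix (Fin n) (Fin n) ℝ) (hN : N.det ≠ 0) :
    ∃ e : ℝn n ≃L[ℝ] ℝn n, (∀ x, e x = N.mulVec x) ∧ (∀ x, e.symm x = N⁻¹.mulVec x) := by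
  have hu : IsUnit N.det := isUnit_iff_ne_zero.mpr hN
  refine ⟨(Matrix.toLin'OfInv (M := N⁻¹) (M' := N) (Matrix.nonsing_inv_mul N hu)
    (Matrix.mul_nonsing_inv N hu)).toContinuousLinearEquiv, fun x => ?_, fun x => ?_⟩
  · simp [Matrix.toLin'OfInv]
  · rfl

lemma mulVec_emb {n : ℕ} (N : Matrix (Fin n) (Fin n) ℝ) (hN : N.det ≠ 0) :
    MeasurableEmbedding (fun x : ℝn n => N.mulVec x) := by
  obtain ⟨e, he, -⟩ := mulVec_equiv N hN
  have := e.toHomeomorph.measurableEmbedding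
  have h2 : (fun x : ℝn n => N.mulVec x) = e.toHomeomorph := by
    funext x; exact (he x).symm
  rw [h2]; exact this

lemma mulVec_map {n : ℕ} (N : Matrix (Fin n) (Fin n) ℝ) (hN : N.det ≠ 0) :
    Measure.map (fun x : ℝn n => N.mulVec x) volume
      = ENNReal.ofReal |N.det|⁻¹ • volume := by
  have := Real.map_matrix_volume_pi_eq_smul_volume_pi hN
  rw [abs_inv] at this
  exact this

lemma lintegral_mulVec {n : ℕ} (N : Matrix (Fin n) (Fin n) ℝ) (hN : N.det ≠ 0)
    (f : ℝn n → ℝ≥0∞) :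
    ∫⁻ x, f (N.mulVec x) = ENNReal.ofReal |N.det|⁻¹ * ∫⁻ x, f x := by
  rw [← (mulVec_emb N hN).lintegral_map, mulVec_map N hN, lintegral_smul_measure, smul_eq_mul]

lemma integral_mulVec {n : ℕ} (N : Matrix (Fin n) (Fin n) ℝ) (hN : N.det ≠ 0)
    (f : ℝn n → ℂ) :
    ∫ x, f (N.mulVec x) = (|N.det|⁻¹ : ℝ) * ∫ x, f x := by
  rw [← (mulVec_emb N hN).integral_map, mulVec_map N hN, integral_smul_measure,
    ENNReal.toReal_ofReal (by positivity), Complex.real_smul]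

lemma qmp_mulVec {n : ℕ} (N : Matrix (Fin n) (Fin n) ℝ) (hN : N.det ≠ 0) :
    Measure.QuasiMeasurePreserving (fun x : ℝn n => N.mulVec x) volume volume := by
  refine ⟨(mulVec_emb N hN).measurable, ?_⟩
  rw [mulVec_map N hN]
  exact Measure.smul_absolutelyContinuous

lemma memLp_mulVec {n : ℕ} (N : Matrix (Fin n) (Fin n) ℝ) (hN : N.det ≠ 0)
    (f : ℝn n → ℂ) (hf : MemLp f 2 volume) : MemLp (fun x => f (N.mulVec x)) 2 volume := by
  have h1 : MemLp f 2 (Measure.map (fun x : ℝn n => N.mulVec x) volume) := by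
    rw [mulVec_map N hN]
    exact hf.smul_measure ENNReal.ofReal_ne_top
  exact h1.comp_of_map (mulVec_emb N hN).measurable.aemeasurable

abbrev En (n : ℕ) := EuclideanSpace ℝ (Fin n)

open scoped FourierTransform SchwartzMap

def toE {n : ℕ} : ℝn n ≃L[ℝ] En n := (EuclideanSpace.equiv (Fin n) ℝ).symm

lemma toE_mp (n : ℕ) : MeasurePreserving (toE (n := n)) volume volume :=
  PiLp.volume_preserving_toLp (Fin n)

lemma toE_symm_mp (n : ℕ) : MeasurePreserving (toE (n := n)).symm volume volume :=
  PiLp.volume_preserving_ofLp (Fin n)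

lemma toE_emb (n : ℕ) : MeasurableEmbedding (toE (n := n)) :=
  (toE (n := n)).toHomeomorph.measurableEmbedding

lemma memLp_E {n : ℕ} {f : ℝn n → ℂ} (hf : MemLp f 2 volume) :
    MemLp (fun x : En n => f (toE.symm x)) 2 volume :=
  hf.comp_measurePreserving (toE_symm_mp n)

/-- L² Fourier transform through `EuclideanSpace`. -/
def UF {n : ℕ} (f : ℝn n → ℂ) (hf : MemLp f 2 volume) : ℝn n → ℂ :=
  fun ξ => (𝓕 ((memLp_E hf).toLp _) : Lp ℂ 2 (volume : Measure (En n))) (toE ξ)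

lemma UF_meas {n : ℕ} (f : ℝn n → ℂ) (hf : MemLp f 2 volume) : Measurable (UF f hf) :=
  (Lp.stronglyMeasurable _).measurable.comp (toE_emb n).measurable

lemma UF_memLp {n : ℕ} (f : ℝn n → ℂ) (hf : MemLp f 2 volume) : MemLp (UF f hf) 2 volume :=
  (Lp.memLp _).comp_measurePreserving (toE_mp n)

lemma UF_ip {n : ℕ} (f g : ℝn n → ℂ) (hf : MemLp f 2 volume) (hg : MemLp g 2 volume) :
    ip (UF f hf) (UF g hg) = ip f g := by
  have h := Lp.inner_fourier_eq ((memLp_E hg).toLp _) ((memLp_E hf).toLp _)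
  rw [L2.inner_def, L2.inner_def] at h
  unfold ip
  calc _ = ∫ x : En n, _ := (toE_mp n).integral_comp (toE_emb n)
            (fun x : En n => (𝓕 ((memLp_E hf).toLp _) : Lp ℂ 2 (volume : Measure (En n))) x *
              conj ((𝓕 ((memLp_E hg).toLp _) : Lp ℂ 2 (volume : Measure (En n))) x))
    _ = _ := by
      simpa using! h
    _ = ∫ x : En n, f (toE.symm x) * conj (g (toE.symm x)) := by
      refine integral_congr_ae ?_
      filter_upwards [(memLp_E hf).coeFn_toLp, (memLp_E hg).coeFn_toLp] with x h1 h2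
      rw [h1, h2]
    _ = _ := by
      rw [← (toE_mp n).integral_comp (toE_emb n)]; simp

lemma ftrans_eq {n : ℕ} (g : SchwartzMap (ℝn n) ℂ) (x : ℝn n) :
    ftrans (fun y => g y) x =
      𝓕 (SchwartzMap.compCLMOfContinuousLinearEquiv ℂ (toE (n := n)).symm g) (toE x) := by
  rw [SchwartzMap.fourier_coe, Real.fourier_eq']
  unfold ftrans
  rw [← (toE_mp n).integral_comp (toE_emb n)]
  refine integral_congr_ae (Filter.Eventually.of_forall fun y => ?_)
  have : inner ℝ (toE y) (toE x) = ∑ i, x i * y i := by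
    simp [PiLp.inner_apply, toE]
  simp only [this]
  simp

lemma UF_pair {n : ℕ} (f : ℝn n → ℂ) (hf : MemLp f 2 volume) : IsFourierPair (UF f hf) f := by
  intro g
  set G := SchwartzMap.compCLMOfContinuousLinearEquiv ℂ (toE (n := n)).symm g with hG
  have h := Lp.fourier_toTemperedDistribution_eq ((memLp_E hf).toLp _)
  have h2 := congrArg (fun T => T G) h
  simp only [TemperedDistribution.fourier_apply, Lp.toTemperedDistribution_apply] at h2
  simp_rw [ftrans_eq]
  calc _ = ∫ x : En n, (𝓕 ((memLp_E hf).toLp _) : Lp ℂ 2 (volume : Measure (En n))) x * G x := by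
        rw [← (toE_mp n).integral_comp (toE_emb n)]
        simp [UF, hG]
    _ = ∫ x : En n, G x • (𝓕 ((memLp_E hf).toLp _) : Lp ℂ 2 (volume : Measure (En n))) x := by
        simp [mul_comm]
    _ = _ := h2.symm
    _ = ∫ x : En n, f (toE.symm x) * 𝓕 G x := by
      refine integral_congr_ae ?_
      filter_upwards [(memLp_E hf).coeFn_toLp] with x h1
      rw [h1, smul_eq_mul, mul_comm]
    _ = _ := by
      rw [← (toE_mp n).integral_comp (toE_emb n)]; simp [hG]

end

lemma integrable_l2_schwartz {n : ℕ} {w : ℝn n → ℂ} (hw : MemLp w 2 volume)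
    (g : SchwartzMap (ℝn n) ℂ) : Integrable (fun x => w x * g x) :=
  hw.integrable_mul (g.memLp 2 volume)

lemma locInt_of_schwartz {n : ℕ} {w : ℝn n → ℂ}
    (hw : ∀ g : SchwartzMap (ℝn n) ℂ, Integrable (fun x => w x * g x)) :
    LocallyIntegrable w := by
  intro x
  let b : ContDiffBump x := ⟨1, 2, by norm_num, by norm_num⟩
  have hb1 : HasCompactSupport (Complex.ofRealCLM ∘ b) := b.hasCompactSupport.comp_left rfl
  have hb2 : ContDiff ℝ ((⊤ : ℕ∞) : WithTop ℕ∞) (Complex.ofRealCLM ∘ b) :=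
    Complex.ofRealCLM.contDiff.comp b.contDiff
  have := hw (hb1.toSchwartzMap hb2)
  refine ⟨Metric.closedBall x 1, Metric.closedBall_mem_nhds x one_pos, ?_⟩
  refine (this.integrableOn (s := Metric.closedBall x 1)).congr_fun ?_
    Metric.isClosed_closedBall.measurableSet
  intro y hy
  have h1 : b y = 1 := b.one_of_mem_closedBall hy
  show w y * ((b y : ℝ) : ℂ) = w y
  rw [h1]; simp

lemma schwartz_uniq {n : ℕ} {w w' : ℝn n → ℂ}
    (hw : ∀ g : SchwartzMap (ℝn n) ℂ, Integrable (fun x => w x * g x))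
    (hw' : ∀ g : SchwartzMap (ℝn n) ℂ, Integrable (fun x => w' x * g x))
    (h : ∀ g : SchwartzMap (ℝn n) ℂ, ∫ x, w x * g x = ∫ x, w' x * g x) :
    w =ᵐ[volume] w' := by
  refine ae_eq_of_integral_contDiff_smul_eq (locInt_of_schwartz hw) (locInt_of_schwartz hw') ?_
  intro g hg1 hg2
  have hb1 : HasCompactSupport (Complex.ofRealCLM ∘ g) := hg2.comp_left rfl
  have hb2 : ContDiff ℝ ((⊤ : ℕ∞) : WithTop ℕ∞) (Complex.ofRealCLM ∘ g) :=
    Complex.ofRealCLM.contDiff.comp hg1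
  have := h (hb1.toSchwartzMap hb2)
  have e : ∀ v : ℝn n → ℂ, ∫ x, g x • v x = ∫ x, v x * (hb1.toSchwartzMap hb2) x := by
    intro v
    refine integral_congr_ae (Filter.Eventually.of_forall fun x => ?_)
    show g x • v x = v x * ((g x : ℝ) : ℂ)
    rw [Complex.real_smul, mul_comm]
  rw [e, e, this]

lemma pair_uniq {n : ℕ} {w f : ℝn n → ℂ} (hw : MemLp w 2 volume) (hf : MemLp f 2 volume)
    (h : IsFourierPair w f) : w =ᵐ[volume] UF f hf :=
  schwartz_uniq (integrable_l2_schwartz hw) (integrable_l2_schwartz (UF_memLp f hf))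
    fun g => (h g).trans (UF_pair f hf g).symm

lemma pair_le {n : ℕ} {w f : ℝn n → ℂ} (hf : MemLp f 2 volume)
    (h : IsFourierPair w f) : ∀ᵐ ξ, ‖UF f hf ξ‖ ≤ ‖w ξ‖ := by
  by_cases hi : ∀ g : SchwartzMap (ℝn n) ℂ, Integrable (fun x => w x * g x)
  · have := schwartz_uniq hi (integrable_l2_schwartz (UF_memLp f hf))
      fun g => (h g).trans (UF_pair f hf g).symm
    filter_upwards [this] with ξ hξ
    rw [hξ]
  · push Not at hi
    obtain ⟨g0, hg0⟩ := hi
    have key : ∀ g : SchwartzMap (ℝn n) ℂ, ¬ Integrable (fun x => w x * g x) →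
        ∫ x, UF f hf x * g x = 0 := by
      intro g hg
      rw [UF_pair f hf g, ← h g, integral_undef hg]
    have hz : ∀ g : SchwartzMap (ℝn n) ℂ, ∫ x, UF f hf x * g x = 0 := by
      intro g
      by_cases hg : Integrable (fun x => w x * g x)
      · have h1 : ¬ Integrable (fun x => w x * (g + g0) x) := by
          intro h2
          apply hg0
          refine (h2.sub hg).congr (Filter.Eventually.of_forall fun x => ?_)
          simp [mul_add]
        have h3 := key _ h1
        have h4 := key _ hg0
        have h5 : ∫ x, UF f hf x * (g + g0) x
            = (∫ x, UF f hf x * g x) + ∫ x, UF f hf x * g0 x := by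
          rw [← integral_add (integrable_l2_schwartz (UF_memLp f hf) g)
            (integrable_l2_schwartz (UF_memLp f hf) g0)]
          simp [mul_add]
        rw [h3, h4] at h5
        simpa using h5.symm
      · exact key g hg
    have : UF f hf =ᵐ[volume] (fun _ => 0) :=
      schwartz_uniq (integrable_l2_schwartz (UF_memLp f hf)) (by simp) (by simpa using hz)
    filter_upwards [this] with ξ hξ
    rw [hξ]; simp

/-- `e^{-2πi⟨ξ,y⟩}` -/
def modu {n : ℕ} (y ξ : ℝn n) : ℂ :=
  Complex.exp (-(2 * Real.pi * (∑ i, ξ i * y i)) * Complex.I)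

lemma cis_temperate : Function.HasTemperateGrowth (fun t : ℝ => Complex.exp (t * Complex.I)) := by
  have hd : ∀ m : ℕ, iteratedDeriv m (fun t : ℝ => Complex.exp (t * Complex.I))
      = fun t : ℝ => I ^ m * Complex.exp (t * Complex.I) := by
    intro m
    induction m with
    | zero => simp
    | succ m ih =>
      rw [iteratedDeriv_succ, ih]
      funext t
      have h1 : HasDerivAt (fun t : ℝ => Complex.exp (t * Complex.I))
          (Complex.exp (t * I) * (1 * I)) t :=
        ((Complex.ofRealCLM.hasDerivAt (x := t)).mul_const I).cexp
      rw [(h1.const_mul (I ^ m)).deriv]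
      ring
  refine ⟨?_, fun m => ⟨0, 1, fun t => ?_⟩⟩
  · have : ContDiff ℝ ((⊤ : ℕ∞) : WithTop ℕ∞) (fun t : ℝ => Complex.ofRealCLM t) :=
      Complex.ofRealCLM.contDiff
    exact (this.mul contDiff_const).cexp
  · rw [norm_iteratedFDeriv_eq_norm_iteratedDeriv, hd]
    simp [Complex.norm_exp_ofReal_mul_I]

lemma modu_temperate {n : ℕ} (y : ℝn n) : Function.HasTemperateGrowth (modu y) := by
  let L : ℝn n →L[ℝ] ℝ := -(2 * Real.pi) • ∑ i, (y i) • ContinuousLinearMap.proj (R := ℝ) (φ := fun _ : Fin n => ℝ) i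
  have : modu y = (fun t : ℝ => Complex.exp (t * Complex.I)) ∘ L := by
    funext ξ
    simp only [modu, L, Function.comp]
    congr 2
    simp [mul_comm]
  rw [this]
  exact cis_temperate.comp L.hasTemperateGrowth

lemma modu_norm {n : ℕ} (y ξ : ℝn n) : ‖modu y ξ‖ = 1 := by
  unfold modu
  have : (-(2 * Real.pi * ((∑ i, ξ i * y i : ℝ) : ℂ)) * Complex.I)
    = ((-(2 * Real.pi * (∑ i, ξ i * y i)) : ℝ) : ℂ) * I := by push_cast; rfl
  rw [this, Complex.norm_exp_ofReal_mul_I]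

lemma modu_cont {n : ℕ} (y : ℝn n) : Continuous (modu y) := by
  unfold modu; fun_prop

lemma pair_tran {n : ℕ} {fh f : ℝn n → ℂ} (h : IsFourierPair fh f) (y : ℝn n) :
    IsFourierPair (fun ξ => modu y ξ * fh ξ) (tran y f) := by
  intro g
  have h1 := h (SchwartzMap.smulLeftCLM ℂ (modu y) g)
  have e1 : ∀ ξ, SchwartzMap.smulLeftCLM ℂ (modu y) g ξ = modu y ξ * g ξ := fun ξ =>
    SchwartzMap.smulLeftCLM_apply_apply (modu_temperate y) g ξ
  have e2 : ∀ x, ftrans (fun ξ => SchwartzMap.smulLeftCLM ℂ (modu y) g ξ) x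
      = ftrans (fun ξ => g ξ) (x + y) := by
    intro x
    unfold ftrans
    refine integral_congr_ae (Filter.Eventually.of_forall fun t => ?_)
    simp only [e1]
    rw [← mul_assoc]
    unfold modu
    rw [← Complex.exp_add]
    congr 2
    rw [← add_mul, ← neg_add, ← mul_add, ← Complex.ofReal_add, ← Finset.sum_add_distrib]
    congr 4
    refine Finset.sum_congr rfl fun i _ => ?_
    simp only [Pi.add_apply]; ring
  simp_rw [e2, e1] at h1
  calc _ = ∫ ξ, fh ξ * (modu y ξ * g ξ) := by
        congr 1; funext ξ; ring
    _ = _ := h1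
    _ = _ := by
      rw [← integral_sub_right_eq_self _ y]
      simp [tran]

lemma pair_dila {n : ℕ} {fh f : ℝn n → ℂ} (h : IsFourierPair fh f)
    (N : Matrix (Fin n) (Fin n) ℝ) (hN : N.det ≠ 0) :
    IsFourierPair (fun ξ => ((Real.sqrt |N.det|)⁻¹ : ℝ) * fh ((N.transpose)⁻¹.mulVec ξ))
      (dila N f) := by
  intro g
  have hNt : N.transpose.det ≠ 0 := by rwa [Matrix.det_transpose]
  obtain ⟨e, he, -⟩ := mulVec_equiv N.transpose hNt
  have h1 := h (SchwartzMap.compCLMOfContinuousLinearEquiv ℂ e g)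
  set G := SchwartzMap.compCLMOfContinuousLinearEquiv ℂ e g with hG
  have hGx : ∀ x, G x = g (N.transpose.mulVec x) := by
    intro x; rw [← he]; rfl
  have e2 : ∀ x, ftrans (fun y => G y) (N.mulVec x)
      = ((|N.det|⁻¹ : ℝ) : ℂ) * ftrans (fun y => g y) x := by
    intro x
    unfold ftrans
    have := integral_mulVec N.transpose hNt
      (fun s => Complex.exp (-(2 * Real.pi * (∑ i, x i * s i)) * Complex.I) * g s)
    rw [Matrix.det_transpose] at this
    rw [← this]
    refine integral_congr_ae (Filter.Eventually.of_forall fun t => ?_)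
    simp only [hGx]
    congr 4
    have : N.mulVec x ⬝ᵥ t = x ⬝ᵥ N.transpose.mulVec t := by
      rw [Matrix.dotProduct_mulVec, Matrix.vecMul_transpose]
    simp only [dotProduct] at this
    rw [this]
  have hpos : (0:ℝ) < |N.det| := abs_pos.mpr hN
  have hc : ((|N.det| : ℝ) : ℂ) ≠ 0 := by exact_mod_cast hpos.ne'
  have e3 : ∀ x, ftrans (fun y => g y) x
      = ((|N.det| : ℝ) : ℂ) * ftrans (fun y => G y) (N.mulVec x) := by
    intro x
    rw [e2, ← mul_assoc]
    push_cast
    rw [mul_inv_cancel₀ hc, one_mul]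
  have hR : ∫ x, dila N f x * ftrans (fun y => g y) x
      = (Real.sqrt |N.det| : ℂ) * ∫ x, f x * ftrans (fun y => G y) x := by
    have := integral_mulVec N hN (fun x => f x * ftrans (fun y => G y) x)
    have h5 : ∫ x, f x * ftrans (fun y => G y) x = ((|N.det| : ℝ) : ℂ) *
        ∫ x, f (N.mulVec x) * ftrans (fun y => G y) (N.mulVec x) := by
      rw [this, ← mul_assoc]
      push_cast
      rw [mul_inv_cancel₀ hc, one_mul]
    rw [h5, ← integral_const_mul, ← integral_const_mul]
    congr 1; funext x
    rw [e3, dila]; ring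
  rw [hR, ← h1]
  have := integral_mulVec N.transpose hNt (fun ξ => (((Real.sqrt |N.det|)⁻¹ : ℝ) : ℂ) *
    fh ((N.transpose)⁻¹.mulVec ξ) * g ξ)
  rw [Matrix.det_transpose] at this
  have h6 : ∀ x : ℝn n, (N.transpose)⁻¹.mulVec (N.transpose.mulVec x) = x := by
    intro x
    rw [Matrix.mulVec_mulVec, Matrix.nonsing_inv_mul _ (isUnit_iff_ne_zero.mpr hNt),
      Matrix.one_mulVec]
  simp_rw [h6, ← hGx, mul_assoc] at this
  rw [integral_const_mul] at this
  simp_rw [mul_assoc]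
  have hs : ((Real.sqrt |N.det| : ℝ) : ℂ) ≠ 0 := by
    exact_mod_cast (Real.sqrt_pos.mpr hpos).ne'
  have hss : ((Real.sqrt |N.det| : ℝ) : ℂ) * (Real.sqrt |N.det| : ℝ) = ((|N.det| : ℝ) : ℂ) := by
    exact_mod_cast Real.mul_self_sqrt hpos.le
  push_cast at this ⊢
  rw [← hss] at this
  field_simp at this
  rw [this]
  congr 1
  funext ξ
  field_simp

lemma ip_self {n : ℕ} {f : ℝn n → ℂ} (hf : MemLp f 2 volume) :
    ENNReal.ofReal (ip f f).re = ∫⁻ x, (‖f x‖₊ : ℝ≥0∞) ^ 2 := by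
  have h1 : ip f f = ((∫ x, ‖f x‖ ^ 2 : ℝ) : ℂ) := by
    unfold ip
    refine Eq.trans ?_ (integral_complex_ofReal (f := fun x => ‖f x‖ ^ 2))
    congr 1; funext x
    rw [Complex.mul_conj, Complex.normSq_eq_norm_sq]
  rw [h1, Complex.ofReal_re, ofReal_integral_eq_lintegral_ofReal]
  · refine lintegral_congr fun x => ?_
    rw [ENNReal.ofReal_pow (norm_nonneg _), ofReal_norm]
    rfl
  · exact (memLp_two_iff_integrable_sq_norm hf.1).mp hf
  · exact Filter.Eventually.of_forall fun x => by positivity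

lemma UF_lint {n : ℕ} {f : ℝn n → ℂ} (hf : MemLp f 2 volume) :
    ∫⁻ x, (‖UF f hf x‖₊ : ℝ≥0∞) ^ 2 = ∫⁻ x, (‖f x‖₊ : ℝ≥0∞) ^ 2 := by
  rw [← ip_self hf, ← ip_self (UF_memLp f hf), UF_ip]

lemma det_ne_of_expansive {n : ℕ} {A : Matrix (Fin n) (Fin n) ℝ} (hA : IsExpansive A) :
    A.det ≠ 0 := by
  intro h
  have h1 : (A.map Complex.ofReal).det = 0 := by
    have := RingHom.map_det Complex.ofRealHom A
    rw [h] at this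
    simpa using! this.symm
  have h2 : (A.map Complex.ofReal).charpoly.IsRoot 0 := by
    rw [Matrix.det_eq_sign_charpoly_coeff] at h1
    rw [Polynomial.IsRoot, ← Polynomial.coeff_zero_eq_eval_zero]
    simpa using h1
  have := hA 0 h2
  norm_num at this

lemma memLp_tran {n : ℕ} {f : ℝn n → ℂ} (hf : MemLp f 2 volume) (y : ℝn n) :
    MemLp (tran y f) 2 volume :=
  hf.comp_measurePreserving (measurePreserving_sub_right volume y)

lemma memLp_dila {n : ℕ} {f : ℝn n → ℂ} (hf : MemLp f 2 volume)
    (N : Matrix (Fin n) (Fin n) ℝ) (hN : N.det ≠ 0) :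
    MemLp (dila N f) 2 volume :=
  (memLp_mulVec N hN f hf).const_mul _

open Matrix in
lemma conj_modu_ech {n : ℕ} (P : Matrix (Fin n) (Fin n) ℝ) (hP : P.det ≠ 0)
    (k : Fin n → ℤ) (η : ℝn n) :
    conj (modu (P.mulVec (ivec k)) ((Pᵀ)⁻¹.mulVec η)) = ech k η := by
  unfold modu ech
  have h : (Pᵀ)⁻¹.mulVec η ⬝ᵥ P.mulVec (ivec k) = η ⬝ᵥ ivec k := by
    rw [Matrix.dotProduct_mulVec, ← Matrix.mulVec_transpose, Matrix.mulVec_mulVec,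
      Matrix.mul_nonsing_inv _ (by rw [Matrix.det_transpose]; exact isUnit_iff_ne_zero.mpr hP),
      Matrix.one_mulVec]
  simp only [dotProduct] at h
  rw [h, ← Complex.exp_conj]
  congr 1
  simp only [map_mul, map_neg, Complex.conj_ofReal, Complex.conj_I]
  push_cast
  simp [Complex.conj_ofNat]

open Matrix in
lemma scale_bound {n : ℕ} (N P : Matrix (Fin n) (Fin n) ℝ) (hN : N.det ≠ 0) (hP : P.det ≠ 0)
    (f φ : ℝn n → ℂ) (hf : MemLp f 2 volume) (hφ : MemLp φ 2 volume) :
    ∑' k : Fin n → ℤ, (‖ip f (dila N (tran (P.mulVec (ivec k)) φ))‖₊ : ℝ≥0∞) ^ 2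
      ≤ ENNReal.ofReal |P.det|⁻¹ * ∫⁻ ξ, (‖UF f hf ξ‖₊ : ℝ≥0∞) ^ 2 *
        ∑' m : Fin n → ℤ, (‖UF φ hφ ((Nᵀ)⁻¹.mulVec ξ) *
          UF φ hφ ((Nᵀ)⁻¹.mulVec ξ + (Pᵀ)⁻¹.mulVec (ivec m))‖₊ : ℝ≥0∞) := by
  have hNt : Nᵀ.det ≠ 0 := by rwa [Matrix.det_transpose]
  have hNu : IsUnit Nᵀ.det := isUnit_iff_ne_zero.mpr hNt
  have hPt : (Pᵀ)⁻¹.det ≠ 0 := by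
    rw [Matrix.det_nonsing_inv, Matrix.det_transpose, Ring.inverse_eq_inv']
    exact inv_ne_zero hP
  set R : Matrix (Fin n) (Fin n) ℝ := Nᵀ * (Pᵀ)⁻¹ with hR
  have hRdet : R.det = N.det * (P.det)⁻¹ := by
    rw [hR, Matrix.det_mul, Matrix.det_nonsing_inv, Matrix.det_transpose, Matrix.det_transpose,
      Ring.inverse_eq_inv']
  have hR0 : R.det ≠ 0 := by
    rw [hRdet]; exact mul_ne_zero hN (inv_ne_zero hP)
  have hRN : ∀ η : ℝn n, (Nᵀ)⁻¹.mulVec (R.mulVec η) = (Pᵀ)⁻¹.mulVec η := by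
    intro η
    rw [Matrix.mulVec_mulVec, hR, ← Matrix.mul_assoc, Matrix.nonsing_inv_mul _ hNu,
      Matrix.one_mul]
  set F := UF f hf with hF
  set Φ := UF φ hφ with hΦ
  have hNinv : (Nᵀ)⁻¹.det ≠ 0 := by
    rw [Matrix.det_nonsing_inv, Ring.inverse_eq_inv']
    exact inv_ne_zero hNt
  set u : ℝn n → ℂ := fun η => F (R.mulVec η) with hu
  set v : ℝn n → ℂ := fun η => conj (Φ ((Pᵀ)⁻¹.mulVec η)) with hv
  have hum : Measurable u := (UF_meas f hf).comp (mulVec_emb R hR0).measurable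
  have hvm : Measurable v := Complex.continuous_conj.measurable.comp
    ((UF_meas φ hφ).comp (mulVec_emb _ hPt).measurable)
  have huL : MemLp u 2 volume := memLp_mulVec R hR0 F (UF_memLp f hf)
  have hvL : MemLp v 2 volume := by
    have := memLp_mulVec _ hPt Φ (UF_memLp φ hφ)
    exact this.star
  have huv : Integrable (fun x => u x * v x) := huL.integrable_mul hvL
  set c : ℝ := |R.det| * (Real.sqrt |N.det|)⁻¹ with hc
  have hcc : 0 ≤ c := by positivity
  have key : ∀ k : Fin n → ℤ, ip f (dila N (tran (P.mulVec (ivec k)) φ))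
      = (c : ℂ) * ∫ η, u η * v η * ech k η := by
    intro k
    have hψ : MemLp (dila N (tran (P.mulVec (ivec k)) φ)) 2 volume :=
      memLp_dila (memLp_tran hφ _) N hN
    have hmod : MemLp (fun ξ => modu (P.mulVec (ivec k)) ξ * Φ ξ) 2 volume := by
      refine (UF_memLp φ hφ).of_le
        ((modu_cont _).measurable.mul (UF_meas φ hφ)).aestronglyMeasurable ?_
      refine Filter.Eventually.of_forall fun ξ => ?_
      rw [norm_mul, modu_norm, one_mul]
    have hpair := pair_dila (pair_tran (UF_pair φ hφ) (P.mulVec (ivec k))) N hN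
    have hψh : MemLp (fun ξ => ((Real.sqrt |N.det|)⁻¹ : ℝ) *
        (modu (P.mulVec (ivec k)) ((Nᵀ)⁻¹.mulVec ξ) * Φ ((Nᵀ)⁻¹.mulVec ξ))) 2 volume :=
      (memLp_mulVec _ hNinv _ hmod).const_mul _
    have hae := pair_uniq hψh hψ hpair
    rw [← UF_ip f _ hf hψ]
    unfold ip
    have h1 : ∫ x, UF f hf x * conj (UF _ hψ x) = ∫ ξ, F ξ *
        conj (((Real.sqrt |N.det|)⁻¹ : ℝ) *
        (modu (P.mulVec (ivec k)) ((Nᵀ)⁻¹.mulVec ξ) * Φ ((Nᵀ)⁻¹.mulVec ξ))) := by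
      refine integral_congr_ae ?_
      filter_upwards [hae] with ξ hξ
      rw [← hξ]
    rw [h1]
    have h2 := integral_mulVec R hR0 (fun ξ => F ξ *
        conj (((Real.sqrt |N.det|)⁻¹ : ℝ) *
        (modu (P.mulVec (ivec k)) ((Nᵀ)⁻¹.mulVec ξ) * Φ ((Nᵀ)⁻¹.mulVec ξ))))
    have hRc : ((|R.det| : ℝ) : ℂ) ≠ 0 := by exact_mod_cast (abs_pos.mpr hR0).ne'
    have h3 : ∀ X Y : ℂ, X = ((|R.det|⁻¹ : ℝ) : ℂ) * Y → Y = ((|R.det| : ℝ) : ℂ) * X := by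
      intro X Y h
      rw [h, ← mul_assoc]; push_cast
      rw [mul_inv_cancel₀ hRc, one_mul]
    rw [h3 _ _ h2, hc, Complex.ofReal_mul, mul_assoc]
    congr 1
    rw [← integral_const_mul]
    congr 1
    funext η
    rw [hRN, map_mul, map_mul, conj_modu_ech P hP, Complex.conj_ofReal]
    simp only [hu, hv]
    ring
  have hpow : ∀ k : Fin n → ℤ,
      (‖ip f (dila N (tran (P.mulVec (ivec k)) φ))‖₊ : ℝ≥0∞) ^ 2
      = ENNReal.ofReal (c ^ 2) * (‖∫ η, u η * v η * ech k η‖₊ : ℝ≥0∞) ^ 2 := by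
    intro k
    rw [key, nnnorm_mul, ENNReal.coe_mul, mul_pow, ENNReal.ofReal_pow hcc]
    congr 2
    rw [← enorm_eq_nnnorm, ← ofReal_norm, Complex.norm_real, Real.norm_of_nonneg hcc]
  simp_rw [hpow]
  rw [ENNReal.tsum_mul_left]
  refine (mul_le_mul_right (lattice_bessel u v hum hvm huv) _).trans (le_of_eq ?_)
  have h4 := lintegral_mulVec R hR0 (fun ξ => (‖F ξ‖₊ : ℝ≥0∞) ^ 2 *
        ∑' m : Fin n → ℤ, (‖Φ ((Nᵀ)⁻¹.mulVec ξ) *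
          Φ ((Nᵀ)⁻¹.mulVec ξ + (Pᵀ)⁻¹.mulVec (ivec m))‖₊ : ℝ≥0∞))
  have h5 : ∫⁻ x, (‖u x‖₊ : ℝ≥0∞) ^ 2 * ∑' m : Fin n → ℤ, (‖v x * v (x + ivec m)‖₊ : ℝ≥0∞)
      = ∫⁻ x, (‖F (R.mulVec x)‖₊ : ℝ≥0∞) ^ 2 *
        ∑' m : Fin n → ℤ, (‖Φ ((Nᵀ)⁻¹.mulVec (R.mulVec x)) *
          Φ ((Nᵀ)⁻¹.mulVec (R.mulVec x) + (Pᵀ)⁻¹.mulVec (ivec m))‖₊ : ℝ≥0∞) := by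
    refine lintegral_congr fun x => ?_
    simp only [hRN, hu, hv, nnnorm_mul, RCLike.nnnorm_conj, Matrix.mulVec_add]
  rw [h5, h4, ← mul_assoc, ← ENNReal.ofReal_mul (by positivity)]
  congr 2
  have hNp : (0:ℝ) < |N.det| := abs_pos.mpr hN
  have hPp : (0:ℝ) < |P.det| := abs_pos.mpr hP
  rw [hc, hRdet, abs_mul, abs_inv, mul_pow, inv_pow, Real.sq_sqrt hNp.le]
  field_simp

open Matrix in
/-- Lemma 2.2, Bessel part: a sufficient condition for a wavelet system
to be a Bessel sequence with bound `C₂`. -/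
theorem wavelet_bessel_condition
    {n : ℕ}
    (A : Matrix (Fin n) (Fin n) ℝ) (hA : IsExpansive A)
    (P : Matrix (Fin n) (Fin n) ℝ) (hP : IsUnit P.det)
    (φ : ℝn n → ℂ) (hφ : MemLp φ 2 volume)
    (φhat : ℝn n → ℂ) (hhat : IsFourierPair φhat φ)
    (M : Set (ℝn n)) (hM : (⋃ l : ℤ, mimg (Aᵀ ^ l) M) = Set.univ)
    (hsum : ∀ ξ ∈ M, Summable (fun p : ℤ × (Fin n → ℤ) =>
      ‖φhat ((Aᵀ ^ p.1).mulVec ξ) *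
        φhat ((Aᵀ ^ p.1).mulVec ξ + (Pᵀ)⁻¹.mulVec (ivec p.2))‖))
    (hbdd : BddAbove ((fun ξ => ∑' p : ℤ × (Fin n → ℤ),
      ‖φhat ((Aᵀ ^ p.1).mulVec ξ) *
        φhat ((Aᵀ ^ p.1).mulVec ξ + (Pᵀ)⁻¹.mulVec (ivec p.2))‖) '' M))
    (C₂ : ℝ)
    (hC₂ : C₂ = (1 / |P.det|) * sSup ((fun ξ => ∑' p : ℤ × (Fin n → ℤ),
      ‖φhat ((Aᵀ ^ p.1).mulVec ξ) *
        φhat ((Aᵀ ^ p.1).mulVec ξ + (Pᵀ)⁻¹.mulVec (ivec p.2))‖) '' M)) :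
    IsBesselWith (waveletSystem A P φ) C₂ := by
  have hA0 : A.det ≠ 0 := det_ne_of_expansive hA
  have hP0 : P.det ≠ 0 := hP.ne_zero
  have hAt : IsUnit Aᵀ.det := by rw [Matrix.det_transpose]; exact isUnit_iff_ne_zero.mpr hA0
  have hAj : ∀ j : ℤ, (A ^ j).det ≠ 0 := fun j =>
    (Matrix.isUnit_det_zpow_iff.mpr (Or.inl (isUnit_iff_ne_zero.mpr hA0))).ne_zero
  have hBj : ∀ j : ℤ, (Aᵀ ^ j).det ≠ 0 := fun j =>
    (Matrix.isUnit_det_zpow_iff.mpr (Or.inl hAt)).ne_zero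
  set S := sSup ((fun ξ => ∑' p : ℤ × (Fin n → ℤ),
      ‖φhat ((Aᵀ ^ p.1).mulVec ξ) *
        φhat ((Aᵀ ^ p.1).mulVec ξ + (Pᵀ)⁻¹.mulVec (ivec p.2))‖) '' M) with hS
  intro f hf
  set Φ := UF φ hφ with hΦ
  have hΦm : Measurable Φ := UF_meas φ hφ
  set G : ℤ → ℝn n → ℝ≥0∞ := fun j ξ => ∑' m : Fin n → ℤ, (‖Φ ((Aᵀ ^ j).mulVec ξ) *
          Φ ((Aᵀ ^ j).mulVec ξ + (Pᵀ)⁻¹.mulVec (ivec m))‖₊ : ℝ≥0∞) with hG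
  have hGm : ∀ j, Measurable (G j) := by
    intro j
    refine Measurable.tsum fun m => ?_
    have h1 := (mulVec_emb _ (hBj j)).measurable
    exact ((hΦm.comp h1).mul (hΦm.comp (h1.add_const _))).nnnorm.coe_nnreal_ennreal
  have hinv : ∀ j : ℤ, ((A ^ j)ᵀ)⁻¹ = Aᵀ ^ (-j) := by
    intro j
    rw [Matrix.transpose_zpow, Matrix.zpow_neg hAt]
  have hpt : ∀ᵐ ξ : ℝn n, ∑' j : ℤ, G (-j) ξ ≤ ENNReal.ofReal S := by
    have hle : ∀ᵐ ξ, ‖Φ ξ‖ ≤ ‖φhat ξ‖ := pair_le hφ hhat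
    have h1 : ∀ᵐ ξ : ℝn n, ∀ j : ℤ, ‖Φ ((Aᵀ ^ j).mulVec ξ)‖ ≤ ‖φhat ((Aᵀ ^ j).mulVec ξ)‖ :=
      ae_all_iff.mpr fun j => (qmp_mulVec _ (hBj j)).ae hle
    have h2 : ∀ᵐ ξ : ℝn n, ∀ j : ℤ, ∀ m : Fin n → ℤ,
        ‖Φ ((Aᵀ ^ j).mulVec ξ + (Pᵀ)⁻¹.mulVec (ivec m))‖
          ≤ ‖φhat ((Aᵀ ^ j).mulVec ξ + (Pᵀ)⁻¹.mulVec (ivec m))‖ :=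
      ae_all_iff.mpr fun j => ae_all_iff.mpr fun m =>
        (qmp_mulVec _ (hBj j)).ae
          ((measurePreserving_add_right (volume : Measure (ℝn n))
            ((Pᵀ)⁻¹.mulVec (ivec m))).quasiMeasurePreserving.ae hle)
    filter_upwards [h1, h2] with ξ h1 h2
    have hξ : ξ ∈ ⋃ l : ℤ, mimg (Aᵀ ^ l) M := by rw [hM]; trivial
    obtain ⟨l, ξ0, hξ0, hl⟩ := Set.mem_iUnion.mp hξ
    have hl : (Aᵀ ^ l).mulVec ξ0 = ξ := hl
    have hcomp : ∀ j : ℤ, (Aᵀ ^ j).mulVec ξ = (Aᵀ ^ (j + l)).mulVec ξ0 := by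
      intro j
      rw [← hl, Matrix.mulVec_mulVec, Matrix.zpow_add hAt]
    set H : ℤ → ℝ≥0∞ := fun j => ∑' m : Fin n → ℤ, ENNReal.ofReal ‖φhat ((Aᵀ ^ j).mulVec ξ0) *
        φhat ((Aᵀ ^ j).mulVec ξ0 + (Pᵀ)⁻¹.mulVec (ivec m))‖ with hH
    calc ∑' j : ℤ, G (-j) ξ = ∑' j : ℤ, G j ξ := (Equiv.neg ℤ).tsum_eq (fun j => G j ξ)
      _ ≤ ∑' j : ℤ, H (j + l) := by
          refine ENNReal.tsum_le_tsum fun j => ENNReal.tsum_le_tsum fun m => ?_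
          rw [← hcomp, ← enorm_eq_nnnorm, ← ofReal_norm]
          refine ENNReal.ofReal_le_ofReal ?_
          rw [norm_mul, norm_mul]
          exact mul_le_mul (h1 j) (h2 j m) (norm_nonneg _) (norm_nonneg _)
      _ = ∑' j : ℤ, H j := (Equiv.addRight l).tsum_eq H
      _ = ∑' p : ℤ × (Fin n → ℤ), ENNReal.ofReal ‖φhat ((Aᵀ ^ p.1).mulVec ξ0) *
        φhat ((Aᵀ ^ p.1).mulVec ξ0 + (Pᵀ)⁻¹.mulVec (ivec p.2))‖ := by
          rw [ENNReal.tsum_prod']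
      _ = ENNReal.ofReal (∑' p : ℤ × (Fin n → ℤ), ‖φhat ((Aᵀ ^ p.1).mulVec ξ0) *
        φhat ((Aᵀ ^ p.1).mulVec ξ0 + (Pᵀ)⁻¹.mulVec (ivec p.2))‖) :=
          (ENNReal.ofReal_tsum_of_nonneg (fun _ => norm_nonneg _) (hsum ξ0 hξ0)).symm
      _ ≤ ENNReal.ofReal S :=
          ENNReal.ofReal_le_ofReal (le_csSup hbdd (Set.mem_image_of_mem _ hξ0))
  have hFm : Measurable fun ξ => (‖UF f hf ξ‖₊ : ℝ≥0∞) ^ 2 :=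
    (UF_meas f hf).nnnorm.coe_nnreal_ennreal.pow_const 2
  calc ∑' i, (‖ip f (waveletSystem A P φ i)‖₊ : ℝ≥0∞) ^ 2
      = ∑' j : ℤ, ∑' k : Fin n → ℤ,
          (‖ip f (dila (A ^ j) (tran (P.mulVec (ivec k)) φ))‖₊ : ℝ≥0∞) ^ 2 :=
        ENNReal.tsum_prod' ..
    _ ≤ ∑' j : ℤ, ENNReal.ofReal |P.det|⁻¹ *
          ∫⁻ ξ, (‖UF f hf ξ‖₊ : ℝ≥0∞) ^ 2 * G (-j) ξ := by
        refine ENNReal.tsum_le_tsum fun j => ?_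
        have := scale_bound (A ^ j) P (hAj j) hP0 f φ hf hφ
        rw [hinv] at this
        exact this
    _ = ENNReal.ofReal |P.det|⁻¹ * ∫⁻ ξ, (‖UF f hf ξ‖₊ : ℝ≥0∞) ^ 2 * ∑' j : ℤ, G (-j) ξ := by
        rw [ENNReal.tsum_mul_left, ← lintegral_tsum
          (f := fun (j : ℤ) ξ => (‖UF f hf ξ‖₊ : ℝ≥0∞) ^ 2 * G (-j) ξ)
          fun j => (hFm.mul (hGm (-j))).aemeasurable]
        simp_rw [ENNReal.tsum_mul_left]
    _ ≤ ENNReal.ofReal |P.det|⁻¹ * ∫⁻ ξ, (‖UF f hf ξ‖₊ : ℝ≥0∞) ^ 2 * ENNReal.ofReal S := by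
        refine mul_le_mul_right (lintegral_mono_ae ?_) _
        filter_upwards [hpt] with ξ hξ
        gcongr
    _ = ENNReal.ofReal C₂ * ∫⁻ x, (‖f x‖₊ : ℝ≥0∞) ^ 2 := by
        rw [lintegral_mul_const _ hFm, UF_lint, hC₂, one_div,
          ENNReal.ofReal_mul (by positivity)]
        ring

end
end

section
/- Let B ∈ GL_n(ℝ) and let K ∈ GL_n(ℝ) be symmetric positive definite with associated Hermitian norm ‖x‖_* = (xᵗKx)^{1/2}, satisfying ‖Bx‖_* ≥ λ‖x‖_* for all x ∈ ℝⁿ and some λ > 1. Set I_* = {x : ‖x‖_* ≤ 1} and O_* = I_* \ B⁻¹(I_*). Then for every l ∈ ℕ, the sets B^m(O_*) for m ∈ ℤ are pairwise disjoint, ∪_{m=−l+1}^{l} B^m(O_*) = B^l(I_*) \ B^{−l}(I_*), and this set contains {x ∈ ℝⁿ : λ^{−l} < ‖x‖_* ≤ λ^l}. -/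
open MeasureTheory Complex Set
open scoped ENNReal Topology ComplexConjugate Classical

noncomputable section

theorem mem_mimg_zpow_aux {n : ℕ} (B : Matrix (Fin n) (Fin n) ℝ) (hB : IsUnit B.det)
    (m : ℤ) (S : Set (ℝn n)) (x : ℝn n) :
    x ∈ mimg (B ^ m) S ↔ (B ^ (-m)).mulVec x ∈ S := by
  unfold mimg
  constructor
  · rintro ⟨y, hy, rfl⟩
    simp only [Matrix.mulVec_mulVec]
    rw [← Matrix.zpow_add hB]
    simpa using hy
  · intro h
    refine ⟨_, h, ?_⟩
    simp only [Matrix.mulVec_mulVec]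
    rw [← Matrix.zpow_add hB]
    simp

theorem annuli_step_aux (g : ℤ → ℝ) (a : ℤ) (ha : 1 < g a) (k : ℕ) (hk : g (a + k) ≤ 1) :
    ∃ m : ℤ, a + 1 ≤ m ∧ m ≤ a + k ∧ g m ≤ 1 ∧ 1 < g (m - 1) := by
  induction k with
  | zero => simp at hk; linarith
  | succ k ih =>
    by_cases h : g (a + k) ≤ 1
    · obtain ⟨m, h1, h2, h3⟩ := ih h
      exact ⟨m, h1, by push_cast; omega, h3⟩
    · refine ⟨a + (k + 1 : ℕ), by push_cast; omega, le_refl _, hk, ?_⟩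
      have : a + ((k + 1 : ℕ) : ℤ) - 1 = a + k := by push_cast; ring
      rw [this]
      exact not_le.mp h

theorem annuli_pow_aux (g : ℤ → ℝ) (lam : ℝ) (hlam : 1 < lam)
    (hg : ∀ m, lam * g (m + 1) ≤ g m) (a : ℤ) (k : ℕ) : lam ^ k * g (a + k) ≤ g a := by
  induction k with
  | zero => simp
  | succ k ih =>
    have h := hg (a + k)
    have h2 : lam ^ k * (lam * g (a + k + 1)) ≤ lam ^ k * g (a + k) :=
      mul_le_mul_of_nonneg_left h (by positivity)
    have h3 : a + ((k + 1 : ℕ) : ℤ) = a + k + 1 := by push_cast; ring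
    rw [h3, pow_succ, mul_assoc]
    exact h2.trans ih

/-- proof of Lemma 3.2: the dilated annuli `B^m(O_*)` are pairwise
disjoint, their union for `m = -l+1, …, l` is `B^l(I_*) \ B^{-l}(I_*)`, and the latter
contains the norm-annulus `{λ^{-l} < ‖x‖_* ≤ λ^l}`. -/
theorem dilated_annuli
    {n : ℕ} (B : Matrix (Fin n) (Fin n) ℝ) (hB : IsUnit B.det)
    (K : Matrix (Fin n) (Fin n) ℝ) (hK : K.PosDef)
    (lam : ℝ) (hlam : 1 < lam)
    (hnorm : ∀ x : ℝn n,
      Real.sqrt (dotProduct (B.mulVec x) (K.mulVec (B.mulVec x))) ≥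
        lam * Real.sqrt (dotProduct x (K.mulVec x)))
    (Istar Ostar : Set (ℝn n))
    (hI : Istar = {x : ℝn n | dotProduct x (K.mulVec x) ≤ 1})
    (hO : Ostar = Istar \ mimg B⁻¹ Istar) :
    (∀ m m' : ℤ, m ≠ m' → Disjoint (mimg (B ^ m) Ostar) (mimg (B ^ m') Ostar)) ∧
    ∀ l : ℕ, 1 ≤ l →
      (⋃ m ∈ Set.Icc (-(l : ℤ) + 1) (l : ℤ), mimg (B ^ m) Ostar) =
          mimg (B ^ (l : ℤ)) Istar \ mimg (B ^ (-(l : ℤ))) Istar ∧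
      {x : ℝn n | lam ^ (-(l : ℤ)) < Real.sqrt (dotProduct x (K.mulVec x)) ∧
          Real.sqrt (dotProduct x (K.mulVec x)) ≤ lam ^ (l : ℤ)} ⊆
        mimg (B ^ (l : ℤ)) Istar \ mimg (B ^ (-(l : ℤ))) Istar := by
  set g : ℝn n → ℤ → ℝ := fun x m =>
    Real.sqrt (dotProduct ((B ^ (-m)).mulVec x) (K.mulVec ((B ^ (-m)).mulVec x))) with hgdef
  have hshift : ∀ (x : ℝn n) (m : ℤ),
      B.mulVec ((B ^ (-m)).mulVec x) = (B ^ (-(m - 1))).mulVec x := by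
    intro x m
    rw [Matrix.mulVec_mulVec]
    congr 1
    have h : -(m - 1) = 1 + -m := by ring
    rw [h, Matrix.zpow_add hB, zpow_one]
  have hg0 : ∀ x m, 0 ≤ g x m := fun x m => Real.sqrt_nonneg _
  have hg : ∀ x m, lam * g x (m + 1) ≤ g x m := by
    intro x m
    have h := hnorm ((B ^ (-(m + 1))).mulVec x)
    rw [hshift, add_sub_cancel_right] at h
    exact h
  have hanti : ∀ x, Antitone (g x) := by
    intro x
    refine antitone_int_of_succ_le fun m => ?_
    nlinarith [hg x m, hg0 x (m + 1)]
  have hmI : ∀ (x : ℝn n) (m : ℤ), x ∈ mimg (B ^ m) Istar ↔ g x m ≤ 1 := by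
    intro x m
    rw [mem_mimg_zpow_aux B hB, hI, hgdef]
    simp only [Set.mem_ofPred_eq]
    rw [Real.sqrt_le_iff]; simp
  have hmO : ∀ (x : ℝn n) (m : ℤ), x ∈ mimg (B ^ m) Ostar ↔ g x m ≤ 1 ∧ 1 < g x (m - 1) := by
    intro x m
    rw [mem_mimg_zpow_aux B hB, hO, Set.mem_sdiff, ← mem_mimg_zpow_aux B hB, hmI, ← not_le,
      ← hmI x (m - 1), ← Matrix.zpow_neg_one, mem_mimg_zpow_aux B hB (-1),
      mem_mimg_zpow_aux B hB (m - 1), neg_neg, zpow_one, hshift]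
  refine ⟨?_, fun l hl => ⟨?_, ?_⟩⟩
  · have key : ∀ m m' : ℤ, m < m' → Disjoint (mimg (B ^ m) Ostar) (mimg (B ^ m') Ostar) := by
      intro m m' h
      rw [Set.disjoint_left]
      intro x hx hx'
      rw [hmO] at hx hx'
      have := hanti x (show m ≤ m' - 1 by omega)
      linarith [hx.1, hx'.2]
    intro m m' h
    rcases lt_or_gt_of_ne h with h | h
    · exact key _ _ h
    · exact (key _ _ h).symm
  · ext x
    simp only [Set.mem_iUnion, Set.mem_sdiff, hmI, hmO, Set.mem_Icc, not_le, exists_prop]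
    constructor
    · rintro ⟨m, ⟨h1, h2⟩, h3, h4⟩
      exact ⟨(hanti x h2).trans h3, h4.trans_le (hanti x (by omega))⟩
    · rintro ⟨h1, h2⟩
      obtain ⟨m, a1, a2, a3⟩ := annuli_step_aux (g x) (-(l : ℤ)) h2 (2 * l)
        (by convert h1 using 2; push_cast; ring)
      exact ⟨m, ⟨a1, by push_cast at a2; omega⟩, a3⟩
  · rintro x ⟨h1, h2⟩
    have e : Real.sqrt (dotProduct x (K.mulVec x)) = g x 0 := by simp [hgdef]
    rw [e] at h1 h2
    have hp : 0 < lam ^ l := by positivity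
    rw [Set.mem_sdiff, hmI, hmI, not_le]
    have k1 := annuli_pow_aux (g x) lam hlam (hg x) 0 l
    have k2 := annuli_pow_aux (g x) lam hlam (hg x) (-(l : ℤ)) l
    rw [zero_add] at k1
    rw [neg_add_cancel] at k2
    rw [zpow_natCast] at h2
    rw [zpow_neg, zpow_natCast, inv_lt_iff_one_lt_mul₀' hp] at h1
    constructor
    · by_contra hc
      nlinarith
    · linarith
end
end

section
/- Let A ∈ GL_n(ℝ) be expansive, B = Aᵗ, let K be a symmetric positive definite matrix whose Hermitian norm ‖x‖_* = (xᵗKx)^{1/2} satisfies ‖Bx‖_* ≥ λ‖x‖_* for some λ > 1, and let I_* = {x : xᵗKx ≤ 1}. Let μ be the smallest eigenvalue of K and ℓ = μ^{−1/2} (so ℓ = max_{x∈I_*}‖x‖₂). Fix c ∈ ℤ and an integer m ≥ 0, and let P ∈ GL_n(ℝ) satisfy ‖P‖₂ ≤ 1 / ( ℓ ‖A^c‖₂ (1 + ‖A^m‖₂) ). Then for every nonzero γ ∈ (Pᵗ)⁻¹ℤⁿ one has ‖γ‖₂ ≥ ℓ(‖A^c‖₂ + ‖A^{c+m}‖₂),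 and consequently (B^{c+m}(I_*) + γ) ∩ B^c(I_*) = ∅. -/
open MeasureTheory Complex Set
open scoped ENNReal Topology ComplexConjugate Classical

noncomputable section

/-- The Euclidean norm on `ℝⁿ`. -/
def euclNorm {n : ℕ} (x : ℝn n) : ℝ := Real.sqrt (∑ i, x i ^ 2)

/-- The spectral (`ℓ² → ℓ²` operator) norm of a matrix. -/
def opNorm2 {n : ℕ} (M : Matrix (Fin n) (Fin n) ℝ) : ℝ :=
  sSup ((fun x => euclNorm (M.mulVec x)) '' {x : ℝn n | euclNorm x ≤ 1})

open scoped Matrix.Norms.L2Operator in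
lemma opNorm2_eq {n : ℕ} (M : Matrix (Fin n) (Fin n) ℝ) : opNorm2 M = ‖M‖ := by
  rw [← Matrix.l2_opNorm_toEuclideanCLM, ← ContinuousLinearMap.sSup_unitClosedBall_eq_norm]
  unfold opNorm2
  congr 1
  ext r
  constructor
  · rintro ⟨x, hx, rfl⟩
    refine ⟨WithLp.toLp 2 x, ?_, ?_⟩
    · simpa [euclNorm, EuclideanSpace.norm_eq] using hx
    · simp [euclNorm, EuclideanSpace.norm_eq]
  · rintro ⟨x, hx, rfl⟩
    refine ⟨WithLp.ofLp x, ?_, ?_⟩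
    · simpa [euclNorm, EuclideanSpace.norm_eq] using hx
    · simp [euclNorm, EuclideanSpace.norm_eq]

lemma euclNorm_eq {n : ℕ} (x : ℝn n) : euclNorm x = ‖WithLp.toLp 2 x‖ := by
  simp [euclNorm, EuclideanSpace.norm_eq]

lemma opNorm2_nonneg {n : ℕ} (M : Matrix (Fin n) (Fin n) ℝ) : 0 ≤ opNorm2 M := by
  rw [opNorm2_eq, ← Matrix.l2_opNorm_toEuclideanCLM]; exact norm_nonneg (Matrix.toEuclideanCLM (n := Fin n) (𝕜 := ℝ) M)

lemma opNorm2_mul {n : ℕ} (M N : Matrix (Fin n) (Fin n) ℝ) :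
    opNorm2 (M * N) ≤ opNorm2 M * opNorm2 N := by
  simp only [opNorm2_eq]; exact Matrix.l2_opNorm_mul M N

lemma opNorm2_transpose {n : ℕ} (M : Matrix (Fin n) (Fin n) ℝ) :
    opNorm2 M.transpose = opNorm2 M := by
  simp only [opNorm2_eq]
  rw [← Matrix.l2_opNorm_conjTranspose M, Matrix.conjTranspose_eq_transpose_of_trivial]

lemma euclNorm_mulVec_le {n : ℕ} (M : Matrix (Fin n) (Fin n) ℝ) (x : ℝn n) :
    euclNorm (M.mulVec x) ≤ opNorm2 M * euclNorm x := by
  rw [opNorm2_eq, euclNorm_eq, euclNorm_eq]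
  exact Matrix.l2_opNorm_mulVec M (WithLp.toLp 2 x)

lemma one_le_euclNorm_ivec {n : ℕ} (z : Fin n → ℤ) (hz : z ≠ 0) : 1 ≤ euclNorm (ivec z) := by
  obtain ⟨i, hi⟩ := Function.ne_iff.mp hz
  unfold euclNorm
  rw [Real.one_le_sqrt]
  have h1 : (1 : ℝ) ≤ ivec z i ^ 2 := by
    have : (1 : ℤ) ≤ z i ^ 2 := by
      have := sq_pos_of_ne_zero (show z i ≠ 0 from hi)
      omega
    unfold ivec
    exact_mod_cast this
  exact h1.trans (Finset.single_le_sum (f := fun i => ivec z i ^ 2)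
    (fun j _ => sq_nonneg _) (Finset.mem_univ i))

lemma posDef_root_pos {n : ℕ} {K : Matrix (Fin n) (Fin n) ℝ} (hK : K.PosDef) {μ : ℝ}
    (h : K.charpoly.IsRoot μ) : 0 < μ := by
  rw [← Matrix.mem_spectrum_iff_isRoot_charpoly,
    hK.1.spectrum_real_eq_range_eigenvalues] at h
  obtain ⟨i, rfl⟩ := h
  exact hK.eigenvalues_pos i

lemma rayleigh {n : ℕ} {K : Matrix (Fin n) (Fin n) ℝ} (hK : K.PosDef) {μ : ℝ}
    (hμmin : ∀ t : ℝ, K.charpoly.IsRoot t → μ ≤ t) (x : ℝn n) :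
    μ * euclNorm x ^ 2 ≤ dotProduct x (K.mulVec x) := by
  have hps : (K - algebraMap ℝ _ μ).PosSemidef := by
    rw [Matrix.posSemidef_iff_isHermitian_and_spectrum_nonneg]
    constructor
    · refine hK.1.sub ?_
      rw [Matrix.algebraMap_eq_diagonal]
      exact Matrix.isHermitian_diagonal _
    · intro t ht
      rw [← spectrum.sub_singleton_eq] at ht
      obtain ⟨a, ha, b, hb, rfl⟩ := ht
      rw [Set.mem_singleton_iff] at hb
      subst hb
      have := hμmin a (Matrix.mem_spectrum_iff_isRoot_charpoly.mp ha)
      simpa using this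
  have h := hps.dotProduct_mulVec_nonneg x
  have h2 : euclNorm x ^ 2 = dotProduct x x := by
    unfold euclNorm
    rw [Real.sq_sqrt (Finset.sum_nonneg fun _ _ => sq_nonneg _)]
    simp [dotProduct, sq]
  rw [h2]
  rw [Matrix.sub_mulVec, dotProduct_sub, Algebra.algebraMap_eq_smul_one, Matrix.smul_mulVec,
    Matrix.one_mulVec, dotProduct_smul] at h
  simp at h
  exact h

lemma touching_balls {E : Type*} [NormedAddCommGroup E] [NormedSpace ℝ E] [StrictConvexSpace ℝ E]
    {g x y : E} {r s : ℝ} (h : r + s ≤ ‖g‖) (hx : ‖x‖ ≤ r) (hy : ‖y‖ ≤ r)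
    (hx' : ‖x - g‖ ≤ s) (hy' : ‖y - g‖ ≤ s) : x = y := by
  by_contra hne
  have h1 := combo_mem_ball_of_ne (z := (0 : E)) (r := r) (x := x) (y := y) (a := 1 / 2)
    (b := 1 / 2) (by simpa using hx) (by simpa using hy) hne (by norm_num) (by norm_num)
    (by norm_num)
  have h2 := combo_mem_ball_of_ne (z := g) (r := s) (x := x) (y := y) (a := 1 / 2)
    (b := 1 / 2) (by simpa [dist_eq_norm] using hx') (by simpa [dist_eq_norm] using hy') hne
    (by norm_num) (by norm_num) (by norm_num)
  rw [Metric.mem_ball] at h1 h2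
  have h3 := dist_triangle_left (0 : E) g ((1 / 2 : ℝ) • x + (1 / 2 : ℝ) • y)
  rw [dist_zero_left] at h3
  linarith

open Matrix in
/-- Section 3.2: the crude lattice choice.  If `‖P‖₂` is small enough,
then every nonzero dual lattice point `γ ∈ (Pᵗ)⁻¹ℤⁿ` is long, and consequently the
translated ellipsoid `B^{c+m}(I_*) + γ` misses `B^c(I_*)`. -/
theorem crude_lattice_choice
    {n : ℕ}
    (A : Matrix (Fin n) (Fin n) ℝ) (hA : IsExpansive A) (hAu : IsUnit A.det)
    (K : Matrix (Fin n) (Fin n) ℝ) (hK : K.PosDef)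
    (lam : ℝ) (hlam : 1 < lam)
    (hnorm : ∀ x : ℝn n,
      Real.sqrt (dotProduct (Aᵀ.mulVec x) (K.mulVec (Aᵀ.mulVec x))) ≥
        lam * Real.sqrt (dotProduct x (K.mulVec x)))
    (Istar : Set (ℝn n)) (hI : Istar = {x : ℝn n | dotProduct x (K.mulVec x) ≤ 1})
    (μ : ℝ) (hμroot : K.charpoly.IsRoot μ)
    (hμmin : ∀ t : ℝ, K.charpoly.IsRoot t → μ ≤ t)
    (ℓ : ℝ) (hℓ : ℓ = (Real.sqrt μ)⁻¹)
    (c : ℤ) (m : ℕ)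
    (P : Matrix (Fin n) (Fin n) ℝ) (hPdet : IsUnit P.det)
    (hPnorm : opNorm2 P ≤ 1 / (ℓ * opNorm2 (A ^ c) * (1 + opNorm2 (A ^ (m : ℤ)))))
    (z : Fin n → ℤ) (hz : z ≠ 0) :
    euclNorm ((Pᵀ)⁻¹.mulVec (ivec z)) ≥
        ℓ * (opNorm2 (A ^ c) + opNorm2 (A ^ (c + (m : ℤ)))) ∧
    volume (((fun x => x + (Pᵀ)⁻¹.mulVec (ivec z)) ''
        mimg (Aᵀ ^ (c + (m : ℤ))) Istar) ∩ mimg (Aᵀ ^ c) Istar) = 0 := by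
  have hμ : 0 < μ := posDef_root_pos hK hμroot
  have hℓpos : 0 < ℓ := by rw [hℓ]; positivity
  have ha := opNorm2_nonneg (A ^ c)
  have hb := opNorm2_nonneg (A ^ (m : ℤ))
  set γ := (Pᵀ)⁻¹.mulVec (ivec z) with hγ
  have hmul : opNorm2 (A ^ (c + (m : ℤ))) ≤ opNorm2 (A ^ c) * opNorm2 (A ^ (m : ℤ)) := by
    rw [Matrix.zpow_add hAu]; exact opNorm2_mul _ _
  have hPγ : Pᵀ.mulVec γ = ivec z := by
    rw [hγ, Matrix.mulVec_mulVec, Matrix.mul_nonsing_inv _ (by rwa [Matrix.det_transpose]),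
      Matrix.one_mulVec]
  have h1 : 1 ≤ opNorm2 P * euclNorm γ := by
    have := euclNorm_mulVec_le Pᵀ γ
    rw [hPγ, opNorm2_transpose] at this
    exact (one_le_euclNorm_ivec z hz).trans this
  have hγ0 : 0 ≤ euclNorm γ := Real.sqrt_nonneg _
  have hlong : ℓ * (opNorm2 (A ^ c) + opNorm2 (A ^ (c + (m : ℤ)))) ≤ euclNorm γ := by
    have hD : ℓ * (opNorm2 (A ^ c) + opNorm2 (A ^ (c + (m : ℤ)))) ≤
        ℓ * opNorm2 (A ^ c) * (1 + opNorm2 (A ^ (m : ℤ))) := by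
      rw [mul_assoc]
      apply mul_le_mul_of_nonneg_left _ hℓpos.le
      linarith
    refine hD.trans ?_
    have h2 := h1.trans (mul_le_mul_of_nonneg_right hPnorm hγ0)
    rcases (show 0 ≤ ℓ * opNorm2 (A ^ c) * (1 + opNorm2 (A ^ (m : ℤ))) by
      positivity).eq_or_lt with h0 | h0
    · rw [← h0]; exact hγ0
    · rw [one_div, inv_mul_eq_div, le_div_iff₀ h0, one_mul] at h2
      exact h2
  refine ⟨hlong, ?_⟩
  have hball : ∀ x ∈ Istar, euclNorm x ≤ ℓ := by
    intro x hx
    rw [hI] at hx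
    have h2 := (rayleigh hK hμmin x).trans hx
    rw [hℓ, ← Real.sqrt_inv]
    apply Real.le_sqrt_of_sq_le
    rw [← one_div, le_div_iff₀ hμ]
    linarith
  have himg : ∀ k : ℤ, ∀ y ∈ mimg (Aᵀ ^ k) Istar, euclNorm y ≤ ℓ * opNorm2 (A ^ k) := by
    rintro k _ ⟨x, hx, rfl⟩
    have h2 := euclNorm_mulVec_le (Aᵀ ^ k) x
    rw [← Matrix.transpose_zpow, opNorm2_transpose] at h2
    rw [← Matrix.transpose_zpow, mul_comm ℓ]
    exact h2.trans (mul_le_mul_of_nonneg_left (hball x hx) (opNorm2_nonneg _))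
  obtain ⟨i, -⟩ := Function.ne_iff.mp hz
  have : Nonempty (Fin n) := ⟨i⟩
  apply Set.Subsingleton.measure_zero
  rintro _ ⟨⟨x, hx, rfl⟩, hx2⟩ _ ⟨⟨y, hy, rfl⟩, hy2⟩
  have e1 := himg _ _ hx
  have e2 := himg _ _ hy
  have e3 := himg _ _ hx2
  have e4 := himg _ _ hy2
  simp only [euclNorm_eq] at e1 e2 e3 e4 hlong
  rw [mul_add] at hlong
  apply WithLp.toLp_injective 2
  refine touching_balls hlong e3 e4 ?_ ?_
  · simpa [WithLp.toLp_add] using e1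
  · simpa [WithLp.toLp_add] using e2

end
end

section
/- Let B be the transpose of the quincunx matrix A = [[1, −1], [1, 1]]. Define g: ℝ² → ℝ by g(x₁,x₂) = −1 + 2x₁ + 2x₂ on the triangle J₁ with vertices (1/2,0), (0,1/2), (1/2,1/2); g = 2x₂ on the triangle J₂ with vertices (1/2,0), (1,0), (1/2,1/2); g = 2x₁ on the triangle J₃ with vertices (0,1), (0,1/2), (1/2,1/2); g = 2 − 2x₁ on the triangle J₄ with vertices (1,0), (1,1), (1/2,1/2); g = 2 − 2x₂ on the triangle J₅ with vertices (0,1), (1,1), (1/2,1/2); and g = 0 otherwise. Define \hat{ψ}(ξ₁,ξ₂) = g(|ξ₁|, |ξ₂|). Then ∑_{j∈ℤ} \hat{ψ}(B^j ξ) = 1 for a.e. ξ ∈ ℝ². -/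
open MeasureTheory Complex Set
open scoped ENNReal Topology ComplexConjugate Classical

noncomputable section

/-- The tent-shaped piecewise linear function `g` of Example 2.6, defined on the five
triangles `J₁, …, J₅`. -/
def tentG (x : Fin 2 → ℝ) : ℝ :=
  if x 0 ≤ 1 / 2 ∧ x 1 ≤ 1 / 2 ∧ 1 / 2 ≤ x 0 + x 1 then -1 + 2 * x 0 + 2 * x 1
  else if 0 ≤ x 1 ∧ 1 / 2 ≤ x 0 ∧ x 0 + x 1 ≤ 1 then 2 * x 1
  else if 0 ≤ x 0 ∧ 1 / 2 ≤ x 1 ∧ x 0 + x 1 ≤ 1 then 2 * x 0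
  else if x 0 ≤ 1 ∧ 1 ≤ x 0 + x 1 ∧ x 1 ≤ x 0 then 2 - 2 * x 0
  else if x 1 ≤ 1 ∧ 1 ≤ x 0 + x 1 ∧ x 0 ≤ x 1 then 2 - 2 * x 1
  else 0

/-- `ψ̂(ξ₁, ξ₂) = g(|ξ₁|, |ξ₂|)`: the mirroring of `g` in the two coordinate axes. -/
def quincunxPsiHat (ξ : Fin 2 → ℝ) : ℝ := tentG (fun i => |ξ i|)

/-- The clamped function whose telescoping differences give `ψ̂`. -/
def phiQ (v : Fin 2 → ℝ) : ℝ := max 0 (min 1 (2 - 2 * max |v 0| |v 1|))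

lemma phiQ_tele (v w : Fin 2 → ℝ) (h0 : w 0 = v 0 + v 1) (h1 : w 1 = -v 0 + v 1) :
    quincunxPsiHat v = phiQ v - phiQ w := by
  have hm : max |w 0| |w 1| = |v 0| + |v 1| := by
    rw [h0, h1]
    rcases abs_cases (v 0) with h | h <;> rcases abs_cases (v 1) with h' | h' <;>
    rcases abs_cases (v 0 + v 1) with h2 | h2 <;> rcases abs_cases (-v 0 + v 1) with h3 | h3 <;>
    rcases max_cases |v 0 + v 1| |-v 0 + v 1| with h4 | h4 <;> linarith
  unfold quincunxPsiHat phiQ tentG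
  beta_reduce
  rw [hm]
  have ha := abs_nonneg (v 0)
  have hb := abs_nonneg (v 1)
  generalize |v 0| = a at *
  generalize |v 1| = b at *
  simp only [max_def, min_def]
  clear hm h0 h1
  split_ifs <;> grind

lemma phiQ_zero (v : Fin 2 → ℝ) (h : 2 ≤ v 0 ^ 2 + v 1 ^ 2) : phiQ v = 0 := by
  have h1 : 1 ≤ max |v 0| |v 1| := by
    by_contra hc
    rw [not_le, max_lt_iff] at hc
    have := (sq_lt_one_iff_abs_lt_one (v 0)).2 hc.1
    have := (sq_lt_one_iff_abs_lt_one (v 1)).2 hc.2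
    linarith
  unfold phiQ
  exact max_eq_left ((min_le_right _ _).trans (by linarith))

lemma phiQ_one (v : Fin 2 → ℝ) (h : v 0 ^ 2 + v 1 ^ 2 ≤ 1 / 4) : phiQ v = 1 := by
  have h1 : max |v 0| |v 1| ≤ 1 / 2 := by
    apply max_le
    · exact abs_le_of_sq_le_sq (by nlinarith [sq_nonneg (v 1)]) (by norm_num)
    · exact abs_le_of_sq_le_sq (by nlinarith [sq_nonneg (v 0)]) (by norm_num)
  unfold phiQ
  rw [min_eq_left (by linarith)]
  norm_num

lemma tele_hasSum (u : ℕ → ℝ) (c : ℝ) (N : ℕ) (h : ∀ n, N ≤ n → u n = c) :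
    HasSum (fun n => u n - u (n + 1)) (u 0 - c) := by
  have := hasSum_sum_of_ne_finset_zero (f := fun n => u n - u (n + 1)) (s := Finset.range N)
    (L := SummationFilter.unconditional ℕ) (by
      intro n hn
      have hn' : N ≤ n := by simpa using hn
      simp [h n hn', h (n + 1) (by omega)])
  rwa [Finset.sum_range_sub', h N le_rfl] at this

lemma tele_int (u : ℤ → ℝ) (N : ℕ) (h0 : ∀ n : ℕ, N ≤ n → u n = 0)
    (h1 : ∀ n : ℕ, N ≤ n → u (-n) = 1) : HasSum (fun j : ℤ => u j - u (j + 1)) 1 := by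
  have a := tele_hasSum (fun n => u n) 0 N h0
  have b := (tele_hasSum (fun n => u (-n)) 1 N h1).neg
  have := HasSum.of_nat_of_neg_add_one (f := fun j : ℤ => u j - u (j + 1)) (m := u 0)
    (m' := 1 - u 0) (by simpa using a) (by
      have e : -(u (-((0 : ℕ) : ℤ)) - 1) = 1 - u 0 := by
        simp
      rw [e] at b
      have e2 : (fun n : ℕ => -(u (-(n : ℤ)) - u (-((n + 1 : ℕ) : ℤ)))) =
          fun n : ℕ => u (-((n : ℤ) + 1)) - u (-((n : ℤ) + 1) + 1) := by
        ext n
        rw [show -((n : ℤ) + 1) + 1 = -n by ring]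
        push_cast
        ring
      rw [e2] at b
      exact b)
  simpa using this

open Matrix in
/-- Example 2.6: `ψ̂` is a `B`-dilative partition of unity for the
transpose `B` of the quincunx matrix. -/
theorem quincunx_partition_of_unity
    (A : Matrix (Fin 2) (Fin 2) ℝ) (hA : A = !![1, -1; 1, 1]) :
    ∀ᵐ ξ : ℝn 2, HasSum (fun j : ℤ => quincunxPsiHat ((Aᵀ ^ j).mulVec ξ)) 1 := by
  set B := Aᵀ with hB
  have hB' : B = !![1, 1; -1, 1] := by
    rw [hB, hA]; ext i j; fin_cases i <;> fin_cases j <;> rfl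
  have hdet : IsUnit B.det := by
    rw [hB', Matrix.det_fin_two_of]; norm_num
  have hne : ∀ᵐ ξ : ℝn 2, ξ ≠ 0 := by
    simp [ae_iff]
  filter_upwards [hne] with ξ hξ
  have hrec : ∀ j : ℤ, (B ^ (j + 1)).mulVec ξ = B.mulVec ((B ^ j).mulVec ξ) := by
    intro j
    rw [add_comm, Matrix.zpow_one_add hdet, Matrix.mulVec_mulVec]
  have hz : (B ^ (0 : ℤ)).mulVec ξ = ξ := by simp
  generalize hv : (fun j : ℤ => (B ^ j).mulVec ξ) = v
  have hv' : ∀ j : ℤ, (B ^ j).mulVec ξ = v j := fun j => congrFun hv j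
  simp only [hv'] at hrec hz ⊢
  have hr0 : ∀ j : ℤ, v (j + 1) 0 = v j 0 + v j 1 := by
    intro j
    rw [hrec j]
    simp [hB', Matrix.mulVec, dotProduct, Fin.sum_univ_two]
  have hr1 : ∀ j : ℤ, v (j + 1) 1 = -v j 0 + v j 1 := by
    intro j
    rw [hrec j]
    simp [hB', Matrix.mulVec, dotProduct, Fin.sum_univ_two]
  clear hv hv' hrec
  have hq : ∀ j : ℤ, (v (j + 1) 0) ^ 2 + (v (j + 1) 1) ^ 2 = 2 * ((v j 0) ^ 2 + (v j 1) ^ 2) := by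
    intro j
    rw [hr0, hr1]; ring
  have hpos : 0 < ξ 0 ^ 2 + ξ 1 ^ 2 := by
    by_contra hc
    apply hξ
    have h0 := sq_nonneg (ξ 0)
    have h1 := sq_nonneg (ξ 1)
    ext i
    fin_cases i
    · exact pow_eq_zero_iff (two_ne_zero) |>.1 (by linarith : ξ 0 ^ 2 = 0)
    · exact pow_eq_zero_iff (two_ne_zero) |>.1 (by linarith : ξ 1 ^ 2 = 0)
  have hp : ∀ n : ℕ, (v n 0) ^ 2 + (v n 1) ^ 2 = 2 ^ n * (ξ 0 ^ 2 + ξ 1 ^ 2) := by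
    intro n
    induction n with
    | zero => simp [hz]
    | succ k ih => push_cast; rw [hq, ih]; ring
  have hn : ∀ n : ℕ, 2 ^ n * ((v (-n) 0) ^ 2 + (v (-n) 1) ^ 2) = ξ 0 ^ 2 + ξ 1 ^ 2 := by
    intro n
    induction n with
    | zero => simp [hz]
    | succ k ih =>
      have := hq (-((k + 1 : ℕ) : ℤ))
      rw [show -((k + 1 : ℕ) : ℤ) + 1 = -(k : ℤ) by push_cast; ring] at this
      rw [← ih, this]; ring
  have hS : ∀ j : ℤ, quincunxPsiHat (v j) = phiQ (v j) - phiQ (v (j + 1)) :=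
    fun j => phiQ_tele _ _ (hr0 j) (hr1 j)
  simp only [hS]
  generalize ξ 0 ^ 2 + ξ 1 ^ 2 = q at *
  obtain ⟨N, hN⟩ := pow_unbounded_of_one_lt (max (2 / q) (4 * q)) (one_lt_two (α := ℝ))
  have hN1 := (le_max_left _ _).trans_lt hN
  have hN2 := (le_max_right _ _).trans_lt hN
  rw [div_lt_iff₀ hpos] at hN1
  refine tele_int (fun j => phiQ (v j)) N (fun n hnN => phiQ_zero _ ?_) (fun n hnN => phiQ_one _ ?_)
  · rw [hp]
    have : (2 : ℝ) ^ N ≤ 2 ^ n := pow_le_pow_right₀ one_le_two hnN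
    nlinarith
  · have : (2 : ℝ) ^ N ≤ 2 ^ n := pow_le_pow_right₀ one_le_two hnN
    have h2 : (0 : ℝ) < 2 ^ n := by positivity
    have h3 := hn n
    by_contra hc
    rw [not_le] at hc
    nlinarith

end
end

section
/- Let B ∈ GL_n(ℝ) be expansive with a symmetric positive definite K whose Hermitian norm satisfies ‖Bx‖_* ≥ λ‖x‖_* for some λ > 1, let I_* = {x : xᵗKx ≤ 1}, and fix c ∈ ℤ, d ∈ ℕ. Let p: ℝⁿ → ℝ be continuous and nonnegative with supp p = closure(B^c(I_*) \ B^{c−d−1}(I_*)) and p > 0 on the interior of this annulus. Define w(x) = ∑_{j∈ℤ} p(B^j x). Then for every x ≠ 0 the sum defining w(x) has at most d + 1 nonzero terms (indeed either d or d+1), and there exist constants 0 < c₀ < C₀ < ∞ such that c₀ < w(x) < C₀ for all x ∈ ℝⁿ \ {0}. -/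
open MeasureTheory Complex Set
open scoped ENNReal Topology ComplexConjugate Classical

noncomputable section

lemma seq_threshold (u : ℤ → ℝ) (r : ℝ) (hr : 1 < r) (hpos : ∀ k, 0 < u k)
    (hu : ∀ k, r * u k ≤ u (k + 1)) : StrictMono u ∧ ∃ N : ℤ, ∀ k, u k ≤ 1 ↔ k ≤ N := by
  have hmono : StrictMono u := by
    apply strictMono_int_of_lt_succ
    intro k
    have := hu k
    have := hpos k
    nlinarith
  refine ⟨hmono, ?_⟩
  have hpow : ∀ (m : ℕ) (k : ℤ), r ^ m * u k ≤ u (k + m) := by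
    intro m
    induction m with
    | zero => intro k; simp
    | succ m ih =>
      intro k
      have h1 := ih k
      have h2 := hu (k + m)
      have h3 : r * (r ^ m * u k) ≤ r * u (k + m) := by gcongr
      calc r ^ (m + 1) * u k = r * (r ^ m * u k) := by ring
        _ ≤ u (k + m + 1) := h3.trans h2
        _ = u (k + (m + 1 : ℕ)) := by push_cast; ring_nf
  obtain ⟨m, hm⟩ := pow_unbounded_of_one_lt (1 / u 0) hr
  obtain ⟨m', hm'⟩ := pow_unbounded_of_one_lt (u 0) hr
  have hb : 1 < u m := by
    have h1 := hpow m 0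
    rw [div_lt_iff₀ (hpos 0)] at hm
    simp only [zero_add] at h1
    linarith
  have ha : u (-m') ≤ 1 := by
    have h1 := hpow m' (-m')
    simp only [neg_add_cancel] at h1
    by_contra h
    push Not at h
    have : 0 < r ^ m' := by positivity
    nlinarith
  obtain ⟨N, hN1, hN2⟩ := Int.exists_greatest_of_bdd (P := fun k => u k ≤ 1)
    ⟨m, fun z hz => by
      by_contra h
      push Not at h
      have := hmono h
      linarith⟩ ⟨-m', ha⟩
  exact ⟨N, fun k => ⟨hN2 k, fun h => (hmono.monotone h).trans hN1⟩⟩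

lemma quad_lower {n : ℕ} (q : ℝn n → ℝ) (hc : Continuous q)
    (hsm : ∀ (t : ℝ) x, q (t • x) = t ^ 2 * q x) (hpos : ∀ x, x ≠ 0 → 0 < q x) :
    IsCompact {x | q x ≤ 1} := by
  obtain ⟨ε, hε, h⟩ := (isCompact_sphere (0 : ℝn n) 1).exists_forall_le' hc.continuousOn
    (a := 0) (fun b hb => hpos b (by
      rintro rfl
      simp at hb))
  apply Metric.isCompact_of_isClosed_isBounded (isClosed_le hc continuous_const)
  apply (Metric.isBounded_closedBall (x := (0 : ℝn n)) (r := 1 + 1 / ε)).subset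
  intro x hx
  simp only [mem_ofPred_eq] at hx
  rw [mem_closedBall_zero_iff]
  by_cases hx0 : x = 0
  · subst hx0; simp; positivity
  have hn : 0 < ‖x‖ := norm_pos_iff.mpr hx0
  have h1 := h (‖x‖⁻¹ • x) (by
    rw [mem_sphere_zero_iff_norm, norm_smul, norm_inv, norm_norm, inv_mul_cancel₀ hn.ne'])
  rw [hsm, inv_pow, inv_mul_eq_div, le_div_iff₀ (by positivity)] at h1
  have h2 : ‖x‖ ^ 2 ≤ 1 / ε := by
    rw [le_div_iff₀ hε]; linarith
  nlinarith [sq_nonneg (‖x‖ - 1), h2, hn]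

lemma pos_iff_aux {n : ℕ} (p f g : ℝn n → ℝ) (hpcont : Continuous p)
    (hf : Continuous f) (hg : Continuous g)
    (hfs : ∀ (t : ℝ) x, f (t • x) = t ^ 2 * f x) (hgs : ∀ (t : ℝ) x, g (t • x) = t ^ 2 * g x)
    (hs : tsupport p = closure {x | f x ≤ 1 ∧ 1 < g x})
    (hp : ∀ x ∈ interior (closure {x | f x ≤ 1 ∧ 1 < g x}), 0 < p x) (x : ℝn n) :
    p x ≠ 0 ↔ f x < 1 ∧ 1 < g x := by
  constructor
  · intro hx
    have hcl : closure {x | f x ≤ 1 ∧ 1 < g x} ⊆ {x | f x ≤ 1 ∧ 1 ≤ g x} := by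
      apply closure_minimal
      · rintro y ⟨h1, h2⟩; exact ⟨h1, h2.le⟩
      · exact (isClosed_le hf continuous_const).inter (isClosed_le continuous_const hg)
    have hsub : ∀ y, p y ≠ 0 → f y ≤ 1 ∧ 1 ≤ g y := fun y hy =>
      hcl (hs ▸ subset_tsupport p hy)
    have hev : ∀ᶠ t : ℝ in 𝓝 1, p (t • x) ≠ 0 := by
      have : ContinuousAt (fun t : ℝ => p (t • x)) 1 := by fun_prop
      apply this.eventually_ne
      simpa using hx
    obtain ⟨δ, hδ, hball⟩ := Metric.eventually_nhds_iff.mp hev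
    have h1 := hsub _ (hball (y := 1 + δ / 2) (by
      rw [Real.dist_eq, add_sub_cancel_left, abs_of_pos (by positivity)]; linarith))
    have h0 := hsub x hx
    set s := min (δ / 2) (1 / 2) with hsdef
    have hs0 : 0 < s := by positivity
    have hs1 : s ≤ 1 / 2 := min_le_right _ _
    have hs2 : s ≤ δ / 2 := min_le_left _ _
    have h2 := hsub _ (hball (y := 1 - s) (by
      rw [Real.dist_eq, show 1 - s - 1 = -s by ring, abs_neg, abs_of_pos hs0]; linarith))
    rw [hfs, hgs] at h1 h2
    constructor
    · by_contra h
      have : f x = 1 := le_antisymm h0.1 (not_lt.mp h)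
      rw [this] at h1
      nlinarith [h1.1]
    · by_contra h
      have : g x = 1 := le_antisymm (not_lt.mp h) h0.2
      rw [this] at h2
      nlinarith [h2.2]
  · rintro ⟨h1, h2⟩
    refine (hp x ?_).ne'
    have hO : IsOpen {x | f x < 1 ∧ 1 < g x} :=
      (isOpen_lt hf continuous_const).inter (isOpen_lt continuous_const hg)
    refine (interior_maximal (t := {x | f x < 1 ∧ 1 < g x}) ?_ hO) ⟨h1, h2⟩
    refine Subset.trans ?_ subset_closure
    rintro y ⟨h3, h4⟩; exact ⟨h3.le, h4⟩

open Matrix in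
/-- Example 4.2: for a continuous nonnegative bump `p` on the annulus
`B^c(I_*) \ B^{c-d-1}(I_*)`, the periodization `w(x) = ∑_{j∈ℤ} p(B^j x)` has, for each
`x ≠ 0`, either `d` or `d+1` nonzero terms, and is bounded away from `0` and `∞`. -/
theorem periodization_bounded
    {n : ℕ}
    (B : Matrix (Fin n) (Fin n) ℝ) (hBu : IsUnit B.det) (hB : IsExpansive B)
    (K : Matrix (Fin n) (Fin n) ℝ) (hK : K.PosDef)
    (lam : ℝ) (hlam : 1 < lam)
    (hnorm : ∀ x : ℝn n,
      Real.sqrt (dotProduct (B.mulVec x) (K.mulVec (B.mulVec x))) ≥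
        lam * Real.sqrt (dotProduct x (K.mulVec x)))
    (Istar : Set (ℝn n)) (hI : Istar = {x : ℝn n | dotProduct x (K.mulVec x) ≤ 1})
    (c : ℤ) (d : ℕ) (hd : 1 ≤ d)
    (p : ℝn n → ℝ) (hpcont : Continuous p) (hpnonneg : ∀ x, 0 ≤ p x)
    (hpsupp : tsupport p = closure (mimg (B ^ c) Istar \ mimg (B ^ (c - (d : ℤ) - 1)) Istar))
    (hppos : ∀ x ∈ interior
      (closure (mimg (B ^ c) Istar \ mimg (B ^ (c - (d : ℤ) - 1)) Istar)), 0 < p x)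
    (w : ℝn n → ℝ) (hw : w = fun x => ∑' j : ℤ, p ((B ^ j).mulVec x)) :
    (∀ x : ℝn n, x ≠ 0 →
      {j : ℤ | p ((B ^ j).mulVec x) ≠ 0}.Finite ∧
      ({j : ℤ | p ((B ^ j).mulVec x) ≠ 0}.ncard = d ∨
        {j : ℤ | p ((B ^ j).mulVec x) ≠ 0}.ncard = d + 1)) ∧
    ∃ c₀ C₀ : ℝ, 0 < c₀ ∧ c₀ < C₀ ∧
      ∀ x : ℝn n, x ≠ 0 → c₀ < w x ∧ w x < C₀ := by
  classical
  set q : ℝn n → ℝ := fun x => dotProduct x (K.mulVec x) with hq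
  set T : ℤ → ℝn n → ℝn n := fun j x => (B ^ j).mulVec x with hT
  have hTadd : ∀ a b x, T a (T b x) = T (a + b) x := by
    intro a b x
    simp only [hT, Matrix.mulVec_mulVec, Matrix.zpow_add hBu]
  have hT0 : ∀ x, T 0 x = x := by intro x; simp [hT]
  have hTs : ∀ j (t : ℝ) x, T j (t • x) = t • T j x := by
    intro j t x; simp only [hT, Matrix.mulVec_smul]
  have hTc : ∀ j, Continuous (T j) := fun j => by
    simp only [hT]; fun_prop
  have hTne : ∀ j x, x ≠ 0 → T j x ≠ 0 := by
    intro j x hx h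
    apply hx
    have := hTadd (-j) j x
    rw [h, neg_add_cancel, hT0] at this
    rw [← this]; simp [hT]
  have hqc : Continuous q := by simp only [hq]; fun_prop
  have hqs : ∀ (t : ℝ) x, q (t • x) = t ^ 2 * q x := by
    intro t x
    simp only [hq, Matrix.mulVec_smul, dotProduct_smul, smul_dotProduct, smul_eq_mul]
    ring
  have hqpos : ∀ x, x ≠ 0 → 0 < q x := by
    intro x hx
    have := hK.dotProduct_mulVec_pos hx
    simpa [hq] using this
  have hq0 : ∀ x, 0 ≤ q x := by
    intro x
    by_cases hx : x = 0
    · subst hx; simp [hq]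
    · exact (hqpos x hx).le
  have hqB : ∀ x, lam ^ 2 * q x ≤ q (T 1 x) := by
    intro x
    have h := hnorm x
    have e : T 1 x = B.mulVec x := by simp [hT]
    rw [e]
    have h1 : 0 ≤ lam * Real.sqrt (q x) := by positivity
    have h2 : (lam * Real.sqrt (q x)) ^ 2 ≤ (Real.sqrt (q (B.mulVec x))) ^ 2 :=
      pow_le_pow_left₀ h1 h 2
    rwa [mul_pow, Real.sq_sqrt (hq0 _), Real.sq_sqrt (hq0 _)] at h2
  have hthr : ∀ x, x ≠ 0 → StrictMono (fun k => q (T k x)) ∧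
      ∃ N : ℤ, ∀ k, q (T k x) ≤ 1 ↔ k ≤ N := by
    intro x hx
    apply seq_threshold _ (lam ^ 2) (by nlinarith) (fun k => hqpos _ (hTne k x hx))
    intro k
    have := hqB (T k x)
    rwa [hTadd, add_comm] at this
  have hmimg : ∀ j, mimg (B ^ j) Istar = {x | q (T (-j) x) ≤ 1} := by
    intro j
    subst hI
    ext x
    constructor
    · rintro ⟨y, hy, rfl⟩
      change q (T (-j) (T j y)) ≤ 1
      rw [hTadd, neg_add_cancel, hT0]
      exact hy
    · intro h
      refine ⟨T (-j) x, h, ?_⟩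
      change T j (T (-j) x) = x
      rw [hTadd, add_neg_cancel, hT0]
  have hann : mimg (B ^ c) Istar \ mimg (B ^ (c - (d : ℤ) - 1)) Istar =
      {x | q (T (-c) x) ≤ 1 ∧ 1 < q (T (-c + d + 1) x)} := by
    rw [hmimg, hmimg]
    ext x
    simp only [mem_sdiff, mem_ofPred_eq, not_le]
    rw [show -(c - (d : ℤ) - 1) = -c + d + 1 by ring]
  rw [hann] at hpsupp hppos
  have hp : ∀ x, p x ≠ 0 ↔ q (T (-c) x) < 1 ∧ 1 < q (T (-c + d + 1) x) :=
    pos_iff_aux p (fun x => q (T (-c) x)) (fun x => q (T (-c + d + 1) x)) hpcont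
      (hqc.comp (hTc _)) (hqc.comp (hTc _))
      (fun t x => by simp only [hTs, hqs]) (fun t x => by simp only [hTs, hqs]) hpsupp hppos
  have hpj : ∀ j x, p (T j x) ≠ 0 ↔ q (T (j - c) x) < 1 ∧ 1 < q (T (j - c + d + 1) x) := by
    intro j x
    rw [hp, hTadd, hTadd, show -c + j = j - c by ring,
      show -c + d + 1 + j = j - c + d + 1 by ring]
  have hcount : ∀ x, x ≠ 0 → ∃ N : ℤ, {j : ℤ | p (T j x) ≠ 0} = Finset.Icc (N - d) N ∨
      {j : ℤ | p (T j x) ≠ 0} = Finset.Icc (N - d) (N - 1) := by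
    intro x hx
    obtain ⟨hm, N, hN⟩ := hthr x hx
    refine ⟨N + c, ?_⟩
    by_cases hN1 : q (T N x) = 1
    · right
      ext j
      have e : q (T (j - c) x) < 1 ↔ j - c < N := by
        rw [← hN1]; exact hm.lt_iff_lt
      rw [mem_ofPred_eq, hpj, e, ← @not_le ℝ, hN, Finset.mem_coe, Finset.mem_Icc]
      omega
    · left
      ext j
      have e : q (T (j - c) x) < 1 ↔ j - c ≤ N := by
        constructor
        · intro h; exact (hN _).mp h.le
        · intro h
          have h1 : q (T (j - c) x) ≤ q (T N x) := hm.monotone h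
          exact h1.trans_lt (lt_of_le_of_ne ((hN N).mpr le_rfl) hN1)
      rw [mem_ofPred_eq, hpj, e, ← @not_le ℝ, hN, Finset.mem_coe, Finset.mem_Icc]
      omega
  have hfin : ∀ x, x ≠ 0 → ∃ s : Finset ℤ, {j : ℤ | p (T j x) ≠ 0} = s ∧
      (s.card = d ∨ s.card = d + 1) := by
    intro x hx
    obtain ⟨N, h | h⟩ := hcount x hx
    · refine ⟨_, h, Or.inr ?_⟩
      rw [Int.card_Icc]; omega
    · refine ⟨_, h, Or.inl ?_⟩
      rw [Int.card_Icc]; omega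
  refine ⟨?_, ?_⟩
  · intro x hx
    obtain ⟨s, hs, hc⟩ := hfin x hx
    change {j : ℤ | p (T j x) ≠ 0}.Finite ∧ ({j : ℤ | p (T j x) ≠ 0}.ncard = d ∨
      {j : ℤ | p (T j x) ≠ 0}.ncard = d + 1)
    rw [hs, Set.ncard_coe_finset]
    exact ⟨s.finite_toSet, hc⟩
  have hI_compact : IsCompact {x | q x ≤ 1} := quad_lower q hqc hqs hqpos
  obtain ⟨M, hM⟩ : ∃ M, ∀ x, p x ≤ M := by
    have hc1 : IsCompact (T c '' {x | q x ≤ 1}) := hI_compact.image (hTc c)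
    obtain ⟨M, hM⟩ := hc1.bddAbove_image hpcont.continuousOn
    refine ⟨max M 0, fun x => ?_⟩
    by_cases hx : p x = 0
    · rw [hx]; exact le_max_right _ _
    · refine le_trans (hM ⟨x, ⟨T (-c) x, ((hp x).mp hx).1.le, ?_⟩, rfl⟩) (le_max_left _ _)
      rw [hTadd, add_neg_cancel, hT0]
  have hM0 : 0 ≤ M := (hpnonneg 0).trans (hM 0)
  have hD : IsCompact {x | q x ≤ 1 ∧ 1 ≤ q (T 1 x)} :=
    hI_compact.inter_right (isClosed_le continuous_const (hqc.comp (hTc 1)))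
  obtain ⟨ε, hε, hεD⟩ := hD.exists_forall_le' (f := fun x => p (T c x) + p (T (c - 1) x)) (a := 0)
    ((hpcont.comp (hTc _)).add (hpcont.comp (hTc _))).continuousOn (by
      rintro x ⟨h1, h2⟩
      have hx : x ≠ 0 := by
        rintro rfl
        have : q (T 1 0) = 0 := by simp [hq, hT]
        linarith
      obtain ⟨hm, -⟩ := hthr x hx
      have hd' : (1 : ℤ) ≤ d := by exact_mod_cast hd
      rcases h1.lt_or_eq with h | h
      · have : p (T c x) ≠ 0 := by
          rw [hpj, sub_self, hT0]
          refine ⟨h, h2.trans_lt (hm ?_)⟩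
          omega
        have h3 := (hpnonneg (T c x)).lt_of_ne' this
        have h4 := hpnonneg (T (c - 1) x)
        linarith
      · have : p (T (c - 1) x) ≠ 0 := by
          rw [hpj]
          have h0 : q (T 0 x) = 1 := by rw [hT0, h]
          rw [← h0]
          refine ⟨hm ?_, hm ?_⟩ <;> omega
        have h3 := (hpnonneg (T (c - 1) x)).lt_of_ne' this
        have h4 := hpnonneg (T c x)
        linarith)
  refine ⟨ε / 2, (d + 1) * M + 1 + ε, by positivity, ?_, ?_⟩
  · have : 0 ≤ (d + 1) * M := by positivity
    linarith
  intro x hx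
  obtain ⟨s, hs, hc⟩ := hfin x hx
  have hout : ∀ j ∉ s, p (T j x) = 0 := by
    intro j hj
    by_contra h
    exact hj (by
      have : j ∈ {j : ℤ | p (T j x) ≠ 0} := h
      rw [hs] at this
      exact this)
  have hwx : w x = ∑ j ∈ s, p (T j x) := by
    rw [hw]
    exact tsum_eq_sum hout
  have hsum : Summable (fun j => p (T j x)) := summable_of_ne_finset_zero hout
  constructor
  · obtain ⟨hm, N, hN⟩ := hthr x hx
    have h := hεD (T N x) ⟨(hN N).mpr le_rfl, by
      rw [hTadd]
      by_contra h
      have := (hN _).mp (not_le.mp h).le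
      omega⟩
    simp only [hTadd] at h
    have h2 := hsum.sum_le_tsum {c + N, c - 1 + N} (fun j _ => hpnonneg (T j x))
    rw [Finset.sum_pair (by omega)] at h2
    have h3 : w x = ∑' j, p (T j x) := by rw [hw]
    linarith
  · rw [hwx]
    have h1 : ∑ j ∈ s, p (T j x) ≤ s.card • M := Finset.sum_le_card_nsmul _ _ _ (fun j _ => hM _)
    have h2 : (s.card : ℝ) ≤ d + 1 := by
      rcases hc with h | h <;> rw [h] <;> push_cast <;> linarith
    rw [nsmul_eq_mul] at h1
    have h3 : (s.card : ℝ) * M ≤ (d + 1) * M := by gcongr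
    linarith


end
end
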